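/- arXiv:math/0409554 — 2 statements merged into one kernel-verified Lean document; each statement's English description precedes it below -/
import Mathlib

section
/- Let 1 ≤ p ≤ q ≤ n be integers and μ = (n−p)^p. Then for every real x the following identity of convergent power series holds: Σ_{ℓ ≥ p(n−p)} ((px)^ℓ/ℓ!) · E^{ℓ,p}( 1_{λ⊇μ} · H(λ) ) = (∏_{i=1}^p (q−i)!/(n−i)!) · x^{p(n−p)} · Σ_{k=0}^∞ x^k Σ_{κ ⊢ k} (p)_κ (q)_κ / ((h^κ)² (n)_κ), where the inner sum is over all partitions κ of k. -/
open MeasureTheory Filter Real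
open scoped BigOperators Topology

noncomputable section

/-- Hook length of the (0-indexed) cell `c` in the Young diagram `μ`. -/
def hookLen (μ : YoungDiagram) (c : ℕ × ℕ) : ℕ :=
  μ.rowLen c.1 + μ.colLen c.2 - c.1 - c.2 - 1

/-- Product of all hook lengths of `μ`. -/
def hookProd (μ : YoungDiagram) : ℕ := ∏ c ∈ μ.cells, hookLen μ c

/-- Number of semistandard Young tableaux of shape `μ` with entries in `{0, …, q-1}`. -/
def numSSYT (μ : YoungDiagram) (q : ℕ) : ℕ :=
  Set.ncard {T : SemistandardYoungTableau μ | ∀ c ∈ μ.cells, T c.1 c.2 < q}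

/-- Number of standard Young tableaux of shape `μ`, via the hook length formula. -/
def fSYT (μ : YoungDiagram) : ℝ := (Nat.factorial μ.card : ℝ) / (hookProd μ : ℝ)

/-- The probability `P^{ℓ,p}` of a partition `μ` of `ℓ`. -/
def Pword (ℓ p : ℕ) (μ : YoungDiagram) : ℝ :=
  fSYT μ * (numSSYT μ p : ℝ) / (p : ℝ) ^ ℓ

/-- The expectation `E^{ℓ,p}` of a function `g` of the partition. -/
def Eword (ℓ p : ℕ) (g : YoungDiagram → ℝ) : ℝ :=
  ∑' μ : YoungDiagram, if μ.card = ℓ then Pword ℓ p μ * g μ else 0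

/-- The expectation `E_{x,p}` with respect to the Poissonized measure `P_{x,p}`. -/
def Epois (x : ℝ) (p : ℕ) (g : YoungDiagram → ℝ) : ℝ :=
  ∑' μ : YoungDiagram,
    Real.exp (-(p * x)) * (p * x) ^ μ.card / (Nat.factorial μ.card : ℝ) *
      Pword μ.card p μ * g μ

/-- Pochhammer symbol `(x)_m = x (x+1) ⋯ (x+m-1)`. -/
def pochRe (x : ℝ) (m : ℕ) : ℝ := ∏ j ∈ Finset.range m, (x + j)

/-- `(x)_κ = ∏_i (x + 1 - i)_{κ_i}` (with `i` 1-indexed). -/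
def pochPart (x : ℝ) (μ : YoungDiagram) : ℝ :=
  ∏ i ∈ Finset.range (μ.colLen 0), pochRe (x - i) (μ.rowLen i)

/-- Strip hook product `H(λ) = ∏_{(i,j) ∈ λ, n-q < j ≤ n-p} h^λ_{ij}` (1-indexed `j`). -/
def Hstrip (n p q : ℕ) (μ : YoungDiagram) : ℕ :=
  ∏ c ∈ μ.cells.filter (fun c => n - q ≤ c.2 ∧ c.2 < n - p), hookLen μ c

/-- The indicator `1_{λ ⊇ (n-p)^p}`. -/
def indSup (n p : ℕ) (μ : YoungDiagram) : ℝ :=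
  if ∀ i < p, n - p ≤ μ.rowLen i then 1 else 0

/-- Vandermonde determinant `Δ_p(x) = ∏_{i<j} (x_i - x_j)`. -/
def vdm {p : ℕ} (x : Fin p → ℝ) : ℝ :=
  ∏ i : Fin p, ∏ j ∈ Finset.Ioi i, (x i - x j)

def Dl {p : ℕ} (l : Fin p → ℕ) : ℤ :=
  (Matrix.of fun i j : Fin p => (-1 : ℤ) ^ (j : ℕ) * ((l i).choose j : ℤ)).det

lemma Dl_vdm {p : ℕ} (l : Fin p → ℕ) :
    (∏ j : Fin p, (Nat.factorial (j : ℕ) : ℤ)) * Dl l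
      = ∏ i : Fin p, ∏ j ∈ Finset.Ioi i, ((l i : ℤ) - l j) := by
  have h := Matrix.det_eval_matrixOfPolynomials_eq_det_vandermonde (fun i => -(l i : ℤ))
      (fun i : Fin p => ascPochhammer ℤ i)
      (fun i => ascPochhammer_natDegree ℤ _) (fun i => monic_ascPochhammer ℤ i)
  rw [Matrix.det_vandermonde] at h
  have e : (Matrix.of fun i j : Fin p => (ascPochhammer ℤ (j : ℕ)).eval (-(l i : ℤ))) =
      Matrix.of fun i j : Fin p => (Nat.factorial (j : ℕ) : ℤ) *
        (Matrix.of fun i j : Fin p => (-1 : ℤ) ^ (j : ℕ) * ((l i).choose j : ℤ)) i j := by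
    ext i j
    simp only [Matrix.of_apply]
    rw [ascPochhammer_eval_neg_eq_descPochhammer, descPochhammer_eval_eq_descFactorial,
      Nat.descFactorial_eq_factorial_mul_choose]
    push_cast; ring
  rw [e, Matrix.det_mul_row] at h
  rw [Dl, ← h]
  refine Finset.prod_congr rfl fun i _ => Finset.prod_congr rfl fun j _ => by ring

lemma sum_Ico_choose (a b j : ℕ) (h : a ≤ b) :
    ∑ m ∈ Finset.Ico a b, ((m.choose j : ℕ) : ℤ) = (b.choose (j + 1) : ℤ) - a.choose (j + 1) := by
  induction b, h using Nat.le_induction with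
  | base => simp
  | succ b hb ih =>
    rw [Finset.sum_Ico_succ_top hb, ih, Nat.choose_succ_succ]; push_cast; ring

lemma Dl_succ {p : ℕ} (l : Fin (p + 1) → ℕ) (hl : ∀ i : Fin p, l i.succ ≤ l i.castSucc) :
    Dl l = ∑ m ∈ Fintype.piFinset (fun i : Fin p => Finset.Ico (l i.succ) (l i.castSucc)), Dl m := by
  set M : Matrix (Fin (p+1)) (Fin (p+1)) ℤ :=
    Matrix.of fun i j => (-1 : ℤ) ^ (j : ℕ) * ((l i).choose j : ℤ) with hM
  set B : Matrix (Fin (p+1)) (Fin (p+1)) ℤ :=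
    Matrix.of (Fin.cons (M 0) (fun i : Fin p => M i.succ - M i.castSucc)) with hB
  have h1 : M.det = B.det := by
    apply Matrix.det_eq_of_forall_row_eq_smul_add_pred (fun _ => 1)
    · intro j; simp [hB]
    · intro i j; simp [hB]
  have h2 : Dl l = M.det := rfl
  rw [h2, h1, Matrix.det_succ_column_zero, Fin.sum_univ_succ]
  have hz : ∀ i : Fin p, B i.succ 0 = 0 := by intro i; simp [hB, hM]
  have h0 : B 0 0 = 1 := by simp [hB, hM]
  simp only [hz, h0, mul_zero, zero_mul, Finset.sum_const_zero, add_zero]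
  have h3 : B.submatrix (Fin.succAbove 0) Fin.succ = fun i : Fin p =>
      ∑ m ∈ Finset.Ico (l i.succ) (l i.castSucc),
        (fun j : Fin p => (-1 : ℤ) ^ (j : ℕ) * ((m.choose j : ℕ) : ℤ)) := by
    ext i j
    rw [Finset.sum_apply, ← Finset.mul_sum, sum_Ico_choose _ _ _ (hl i)]
    simp [hB, hM]; ring
  have h4 := (Matrix.detRowAlternating (n := Fin p) (R := ℤ)).toMultilinearMap.map_sum_finset
    (fun (i : Fin p) m => (fun j : Fin p => (-1 : ℤ) ^ (j : ℕ) * ((m.choose j : ℕ) : ℤ)))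
    (fun i : Fin p => Finset.Ico (l i.succ) (l i.castSucc))
  simp only [Fin.val_zero, pow_zero, one_mul]
  rw [h3]
  exact h4

lemma yd_ext {a b : YoungDiagram} (h : ∀ i, a.rowLen i = b.rowLen i) : a = b := by
  ext ⟨i, j⟩
  rw [YoungDiagram.mem_cells, YoungDiagram.mem_cells, YoungDiagram.mem_iff_lt_rowLen,
    YoungDiagram.mem_iff_lt_rowLen, h]

/-- diagram with rows `f 0, …, f (p-1)` -/
def ofFun (p : ℕ) (f : ℕ → ℕ) (hf : Antitone f) : YoungDiagram where
  cells := (Finset.range p ×ˢ Finset.range (f 0)).filter (fun c => c.2 < f c.1)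
  isLowerSet := by
    rintro ⟨i, j⟩ ⟨i', j'⟩ ⟨h1, h2⟩ h
    simp only [Finset.coe_filter, Finset.mem_product, Finset.mem_range, Set.mem_ofPred_eq] at *
    have := hf h1
    omega

lemma mem_ofFun {p : ℕ} {f : ℕ → ℕ} {hf : Antitone f} {i j : ℕ} :
    (i, j) ∈ ofFun p f hf ↔ i < p ∧ j < f i := by
  rw [← YoungDiagram.mem_cells]
  simp only [ofFun, Finset.mem_filter, Finset.mem_product, Finset.mem_range]
  have := hf (Nat.zero_le i)
  omega

lemma rowLen_ofFun {p : ℕ} {f : ℕ → ℕ} {hf : Antitone f} {i : ℕ} :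
    (ofFun p f hf).rowLen i = if i < p then f i else 0 := by
  apply eq_of_forall_lt_iff
  intro j
  rw [← YoungDiagram.mem_iff_lt_rowLen, mem_ofFun]
  split_ifs <;> simp_all

/-- shifted row lengths -/
def LL (p : ℕ) (a : YoungDiagram) (i : Fin p) : ℕ := a.rowLen i + (p - 1 - i)

lemma rowLen_zero_of_le {a : YoungDiagram} {p i : ℕ} (h : a.rowLen p = 0) (hi : p ≤ i) :
    a.rowLen i = 0 := by
  have := a.rowLen_anti p i hi
  omega

lemma LL_inj {p : ℕ} {a b : YoungDiagram} (ha : a.rowLen p = 0) (hb : b.rowLen p = 0)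
    (h : LL p a = LL p b) : a = b := by
  apply yd_ext
  intro i
  rcases lt_or_ge i p with hi | hi
  · have := congrFun h ⟨i, hi⟩
    simp only [LL] at this
    omega
  · rw [rowLen_zero_of_le ha hi, rowLen_zero_of_le hb hi]

lemma ssyt_mono {a : YoungDiagram} (T : SemistandardYoungTableau a) {i j i' j' : ℕ}
    (hi : i ≤ i') (hj : j ≤ j') (h : (i', j') ∈ a) : T i j ≤ T i' j' :=
  (T.col_weak hi (a.up_left_mem le_rfl hj h)).trans (T.row_weak_of_le hj h)

lemma ssyt_ge {a : YoungDiagram} (T : SemistandardYoungTableau a) {i j : ℕ}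
    (h : (i, j) ∈ a) : i ≤ T i j := by
  induction i with
  | zero => simp
  | succ i ih =>
    have := ih (a.up_left_mem (Nat.le_succ i) le_rfl h)
    have := T.col_strict (Nat.lt_add_one i) h
    omega

/-- bounded tableaux -/
def BT (a : YoungDiagram) (p : ℕ) : Set (SemistandardYoungTableau a) :=
  {T | ∀ c ∈ a.cells, T c.1 c.2 < p}

lemma BT_iff {a : YoungDiagram} {p : ℕ} {T : SemistandardYoungTableau a} :
    T ∈ BT a p ↔ ∀ i j, (i, j) ∈ a → T i j < p := by
  constructor
  · intro h i j hij
    exact h (i, j) ((YoungDiagram.mem_cells _).2 hij)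
  · rintro h ⟨i, j⟩ hij
    exact h i j ((YoungDiagram.mem_cells _).1 hij)

lemma BT_finite (a : YoungDiagram) (p : ℕ) : (BT a p).Finite := by
  have : Finite (BT a p) := by
    let F : BT a p → (a.cells → Fin p) := fun T c => ⟨T.1 c.1.1 c.1.2, T.2 c.1 c.2⟩
    apply Finite.of_injective F
    intro T T' h
    apply Subtype.ext
    apply SemistandardYoungTableau.ext
    intro i j
    by_cases hc : (i, j) ∈ a
    · have := congrFun h ⟨(i, j), (YoungDiagram.mem_cells _).2 hc⟩
      simpa [F] using this
    · rw [T.1.zeros hc, T'.1.zeros hc]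
  exact this

/-- cells with entry `< p` -/
def subD {a : YoungDiagram} (p : ℕ) (T : SemistandardYoungTableau a) : YoungDiagram where
  cells := a.cells.filter (fun c => T c.1 c.2 < p)
  isLowerSet := by
    rintro ⟨i, j⟩ ⟨i', j'⟩ ⟨h1, h2⟩ h
    simp only [Finset.coe_filter, YoungDiagram.mem_cells, Set.mem_ofPred_eq] at *
    exact ⟨a.up_left_mem h1 h2 h.1, (ssyt_mono T h1 h2 h.1).trans_lt h.2⟩

lemma mem_subD {a : YoungDiagram} {p : ℕ} {T : SemistandardYoungTableau a} {i j : ℕ} :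
    (i, j) ∈ subD p T ↔ (i, j) ∈ a ∧ T i j < p := by
  rw [← YoungDiagram.mem_cells]
  simp [subD]

lemma subD_rowLen {a : YoungDiagram} {p : ℕ} (T : SemistandardYoungTableau a) :
    (subD p T).rowLen p = 0 := by
  by_contra h
  have : (p, 0) ∈ subD p T := YoungDiagram.mem_iff_lt_rowLen.2 (Nat.pos_of_ne_zero h)
  rw [mem_subD] at this
  have := ssyt_ge T this.1
  omega

lemma subD_le {a : YoungDiagram} {p : ℕ} (T : SemistandardYoungTableau a) (i : ℕ) :
    (subD p T).rowLen i ≤ a.rowLen i := by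
  apply le_of_forall_lt
  intro j hj
  rw [← YoungDiagram.mem_iff_lt_rowLen] at *
  exact (mem_subD.1 hj).1

lemma subD_ge {a : YoungDiagram} {p : ℕ} {T : SemistandardYoungTableau a} (hT : T ∈ BT a (p + 1))
    (i : ℕ) : a.rowLen (i + 1) ≤ (subD p T).rowLen i := by
  apply le_of_forall_lt
  intro j hj
  rw [← YoungDiagram.mem_iff_lt_rowLen] at *
  have h1 := BT_iff.1 hT _ _ hj
  have h2 := T.col_strict (Nat.lt_add_one i) hj
  exact mem_subD.2 ⟨a.up_left_mem (Nat.le_succ i) le_rfl hj, by omega⟩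

/-- restriction -/
def resT {a b : YoungDiagram} (hba : ∀ i j, (i, j) ∈ b → (i, j) ∈ a)
    (T : SemistandardYoungTableau a) : SemistandardYoungTableau b where
  entry i j := if (i, j) ∈ b then T i j else 0
  row_weak' := by
    intro i j1 j2 hj h
    rw [if_pos h, if_pos (b.up_left_mem le_rfl hj.le h)]
    exact T.row_weak hj (hba _ _ h)
  col_strict' := by
    intro i1 i2 j hi h
    rw [if_pos h, if_pos (b.up_left_mem hi.le le_rfl h)]
    exact T.col_strict hi (hba _ _ h)
  zeros' := by
    intro i j h
    rw [if_neg h]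

/-- extension -/
def extT {a b : YoungDiagram} (p : ℕ) (hba : ∀ i j, (i, j) ∈ b → (i, j) ∈ a)
    (hab : ∀ i j, (i + 1, j) ∈ a → (i, j) ∈ b)
    (T : SemistandardYoungTableau b) (hT : T ∈ BT b p) : SemistandardYoungTableau a where
  entry i j := if (i, j) ∈ b then T i j else if (i, j) ∈ a then p else 0
  row_weak' := by
    intro i j1 j2 hj h
    have h1 := a.up_left_mem le_rfl hj.le h
    by_cases hb : (i, j2) ∈ b
    · rw [if_pos hb, if_pos (b.up_left_mem le_rfl hj.le hb)]
      exact T.row_weak hj hb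
    · rw [if_neg hb, if_pos h, if_pos h1]
      split_ifs with h2
      · exact (BT_iff.1 hT _ _ h2).le
      · exact le_rfl
  col_strict' := by
    intro i1 i2 j hi h
    have h1 : (i1, j) ∈ b := hab _ _ (a.up_left_mem hi le_rfl h)
    rw [if_pos h1]
    by_cases hb : (i2, j) ∈ b
    · rw [if_pos hb]
      exact T.col_strict hi hb
    · rw [if_neg hb, if_pos h]
      exact BT_iff.1 hT _ _ h1
  zeros' := by
    intro i j h
    rw [if_neg (fun hb => h (hba _ _ hb)), if_neg h]

lemma resT_apply {a b : YoungDiagram} (hba : ∀ i j, (i, j) ∈ b → (i, j) ∈ a)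
    (T : SemistandardYoungTableau a) (i j : ℕ) :
    resT hba T i j = if (i, j) ∈ b then T i j else 0 := rfl

lemma extT_apply {a b : YoungDiagram} (p : ℕ) (hba : ∀ i j, (i, j) ∈ b → (i, j) ∈ a)
    (hab : ∀ i j, (i + 1, j) ∈ a → (i, j) ∈ b)
    (T : SemistandardYoungTableau b) (hT : T ∈ BT b p) (i j : ℕ) :
    extT p hba hab T hT i j = if (i, j) ∈ b then T i j else if (i, j) ∈ a then p else 0 := rfl

lemma fiber_card {a b : YoungDiagram} (p : ℕ) (hba : ∀ i j, (i, j) ∈ b → (i, j) ∈ a)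
    (hab : ∀ i j, (i + 1, j) ∈ a → (i, j) ∈ b) :
    Set.ncard {T | T ∈ BT a (p + 1) ∧ subD p T = b} = Set.ncard (BT b p) := by
  refine Set.ncard_congr (fun T _ => resT hba T) ?_ ?_ ?_
  · rintro T ⟨h1, h2⟩
    rw [BT_iff]
    intro i j hij
    rw [resT_apply, if_pos hij]
    rw [← h2] at hij
    exact (mem_subD.1 hij).2
  · rintro T T' ⟨h1, h2⟩ ⟨h1', h2'⟩ h
    apply SemistandardYoungTableau.ext
    intro i j
    by_cases hb : (i, j) ∈ b
    · have := congrArg (fun S : SemistandardYoungTableau b => S i j) h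
      simpa [resT_apply, hb] using this
    · by_cases ha : (i, j) ∈ a
      · have e1 := BT_iff.1 h1 _ _ ha
        have e2 := BT_iff.1 h1' _ _ ha
        have e3 : ¬ T i j < p := fun hh => hb (h2 ▸ mem_subD.2 ⟨ha, hh⟩)
        have e4 : ¬ T' i j < p := fun hh => hb (h2' ▸ mem_subD.2 ⟨ha, hh⟩)
        omega
      · rw [T.zeros ha, T'.zeros ha]
  · intro S hS
    refine ⟨extT p hba hab S hS, ⟨?_, ?_⟩, ?_⟩
    · rw [BT_iff]
      intro i j hij
      rw [extT_apply]
      split_ifs with hb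
      · have := BT_iff.1 hS _ _ hb
        omega
      · omega
    · ext ⟨i, j⟩
      rw [YoungDiagram.mem_cells, YoungDiagram.mem_cells, mem_subD, extT_apply]
      by_cases hb : (i, j) ∈ b
      · simp [hb, hba _ _ hb, BT_iff.1 hS _ _ hb]
      · by_cases ha : (i, j) ∈ a <;> simp [hb, ha]
    · apply SemistandardYoungTableau.ext
      intro i j
      rw [resT_apply, extT_apply]
      split_ifs with hb
      · rfl
      · rw [S.zeros hb]

lemma numSSYT_eq_BT (a : YoungDiagram) (p : ℕ) : numSSYT a p = (BT a p).ncard := rfl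

lemma exists_diagram {p : ℕ} {a : YoungDiagram} {m : Fin p → ℕ}
    (hm : m ∈ Fintype.piFinset (fun i : Fin p =>
      Finset.Ico (LL (p + 1) a i.succ) (LL (p + 1) a i.castSucc))) :
    ∃ b : YoungDiagram, b.rowLen p = 0 ∧ LL p b = m ∧
      ∀ i < p, a.rowLen (i + 1) ≤ b.rowLen i ∧ b.rowLen i ≤ a.rowLen i := by
  rw [Fintype.mem_piFinset] at hm
  have hm' : ∀ i : Fin p, a.rowLen (i + 1) + (p - 1 - i) ≤ m i ∧
      m i ≤ a.rowLen i + (p - 1 - i) := by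
    intro i
    have := Finset.mem_Ico.1 (hm i)
    simp only [LL, Fin.val_succ, Fin.val_castSucc] at this
    have := i.2
    omega
  let f : ℕ → ℕ := fun i => if h : i < p then m ⟨i, h⟩ - (p - 1 - i) else 0
  have hf : Antitone f := by
    apply antitone_nat_of_succ_le
    intro i
    simp only [f]
    split_ifs with h1 h2
    · have e1 := hm' ⟨i, h2⟩
      have e2 := hm' ⟨i + 1, h1⟩
      simp only at e1 e2
      omega
    · omega
    · omega
    · omega
  refine ⟨ofFun p f hf, ?_, ?_, ?_⟩
  · simp [rowLen_ofFun]
  · ext i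
    have := hm' i
    simp [LL, rowLen_ofFun, f]
    omega
  · intro i hi
    have := hm' ⟨i, hi⟩
    simp only at this
    simp [rowLen_ofFun, f, hi]
    omega

lemma numSSYT_eq_Dl (p : ℕ) : ∀ a : YoungDiagram, a.rowLen p = 0 →
    (numSSYT a p : ℤ) = Dl (LL p a) := by
  induction p with
  | zero =>
    intro a ha
    have hc : ∀ i j, (i, j) ∉ a := by
      intro i j h
      rw [YoungDiagram.mem_iff_lt_rowLen, rowLen_zero_of_le ha (Nat.zero_le i)] at h
      omega
    have : BT a 0 = {SemistandardYoungTableau.highestWeight a} := by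
      ext T
      simp only [Set.mem_singleton_iff]
      constructor
      · intro _
        apply SemistandardYoungTableau.ext
        intro i j
        rw [T.zeros (hc i j), SemistandardYoungTableau.zeros _ (hc i j)]
      · intro _
        exact BT_iff.2 fun i j h => absurd h (hc i j)
    rw [numSSYT_eq_BT, this, Dl]
    simp
  | succ p ih =>
    intro a ha
    have hanti : ∀ i : Fin p, LL (p + 1) a i.succ ≤ LL (p + 1) a i.castSucc := by
      intro i
      have := a.rowLen_anti i (i + 1) (Nat.le_succ _)
      simp only [LL, Fin.val_succ, Fin.val_castSucc]
      omega
    rw [Dl_succ _ hanti, numSSYT_eq_BT]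
    classical
    have hfin := BT_finite a (p + 1)
    rw [Set.ncard_eq_toFinset_card _ hfin]
    rw [Finset.card_eq_sum_card_fiberwise (f := fun T => LL p (subD p T))
      (t := Fintype.piFinset (fun i : Fin p =>
        Finset.Ico (LL (p + 1) a i.succ) (LL (p + 1) a i.castSucc)))]
    · push_cast
      refine Finset.sum_congr rfl fun m hm => ?_
      obtain ⟨b, hb0, rfl, hb⟩ := exists_diagram hm
      rw [← ih b hb0, numSSYT_eq_BT, ← fiber_card (a := a) p, ← Set.ncard_coe_finset]
      · congr 2
        ext T
        simp only [Finset.coe_filter, Set.Finite.mem_toFinset, Set.mem_ofPred_eq]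
        constructor
        · rintro ⟨h1, h2⟩
          exact ⟨h1, LL_inj (subD_rowLen T) hb0 h2⟩
        · rintro ⟨h1, h2⟩
          exact ⟨h1, by rw [h2]⟩
      · intro i j h
        rw [YoungDiagram.mem_iff_lt_rowLen] at *
        rcases lt_or_ge i p with hi | hi
        · have := (hb i hi).2
          omega
        · rw [rowLen_zero_of_le hb0 hi] at h
          omega
      · intro i j h
        rw [YoungDiagram.mem_iff_lt_rowLen] at *
        rcases lt_or_ge i p with hi | hi
        · have := (hb i hi).1
          omega
        · rw [rowLen_zero_of_le ha (by omega)] at h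
          omega
    · intro T hT
      have hT' : T ∈ BT a (p + 1) := by simpa using hT
      rw [Finset.mem_coe, Fintype.mem_piFinset]
      intro i
      rw [Finset.mem_Ico]
      have h1 := subD_le (p := p) T i
      have h2 := subD_ge hT' i
      have := i.2
      simp only [LL, Fin.val_succ, Fin.val_castSucc]
      omega

/-- shifted row lengths, natural-number index -/
def ln (p : ℕ) (a : YoungDiagram) (i : ℕ) : ℕ := a.rowLen i + (p - 1 - i)

lemma lt_colLen_iff {a : YoungDiagram} {i j : ℕ} : i < a.colLen j ↔ j < a.rowLen i := by
  rw [← YoungDiagram.mem_iff_lt_colLen, YoungDiagram.mem_iff_lt_rowLen]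

lemma hook_row {p : ℕ} {a : YoungDiagram} (ha : a.rowLen p = 0) {i : ℕ} (hi : i < p) :
    (∏ j ∈ Finset.range (a.rowLen i), hookLen a (i, j)) *
      ∏ k ∈ Finset.Ioo i p, (ln p a i - ln p a k) = (ln p a i).factorial := by
  have hA : ∀ j < a.rowLen i, i < a.colLen j := fun j hj => lt_colLen_iff.2 hj
  have hcp : ∀ j, a.colLen j ≤ p := by
    intro j
    by_contra h
    have := lt_colLen_iff.1 (not_le.1 h)
    omega
  have hinj1 : Set.InjOn (fun j => hookLen a (i, j)) (Finset.range (a.rowLen i)) := by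
    intro j hj j' hj' h
    simp only [Finset.coe_range, Set.mem_Iio] at hj hj'
    simp only [hookLen] at h
    have h1 := hA j hj
    have h2 := hA j' hj'
    rcases lt_trichotomy j j' with hh | hh | hh
    · have := a.colLen_anti j j' hh.le
      omega
    · exact hh
    · have := a.colLen_anti j' j hh.le
      omega
  have hinj2 : Set.InjOn (fun k => ln p a i - ln p a k) (Finset.Ioo i p) := by
    intro k hk k' hk' h
    simp only [Finset.coe_Ioo, Set.mem_Ioo] at hk hk'
    simp only [ln] at h
    have h1 := a.rowLen_anti i k hk.1.le
    have h2 := a.rowLen_anti i k' hk'.1.le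
    rcases lt_trichotomy k k' with hh | hh | hh
    · have := a.rowLen_anti k k' hh.le
      omega
    · exact hh
    · have := a.rowLen_anti k' k hh.le
      omega
  have hdis : Disjoint ((Finset.range (a.rowLen i)).image (fun j => hookLen a (i, j)))
      ((Finset.Ioo i p).image (fun k => ln p a i - ln p a k)) := by
    rw [Finset.disjoint_left]
    intro v hv hv'
    simp only [Finset.mem_image, Finset.mem_range, Finset.mem_Ioo] at hv hv'
    obtain ⟨j, hj, rfl⟩ := hv
    obtain ⟨k, hk, h⟩ := hv'
    simp only [hookLen, ln] at h
    have h1 := a.rowLen_anti i k hk.1.le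
    have h2 := hA j hj
    have h3 := @lt_colLen_iff a k j
    omega
  have hunion : ((Finset.range (a.rowLen i)).image (fun j => hookLen a (i, j))) ∪
      ((Finset.Ioo i p).image (fun k => ln p a i - ln p a k)) = Finset.Icc 1 (ln p a i) := by
    apply Finset.eq_of_subset_of_card_le
    · intro v hv
      simp only [Finset.mem_union, Finset.mem_image, Finset.mem_range, Finset.mem_Ioo,
        Finset.mem_Icc] at hv ⊢
      rcases hv with ⟨j, hj, rfl⟩ | ⟨k, hk, rfl⟩
      · have h2 := hA j hj
        have h3 := hcp j
        simp only [hookLen, ln]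
        omega
      · have h1 := a.rowLen_anti i k hk.1.le
        simp only [ln]
        omega
    · rw [Finset.card_union_of_disjoint hdis, Finset.card_image_of_injOn hinj1,
        Finset.card_image_of_injOn hinj2]
      simp [ln]
      omega
  rw [← Finset.prod_Ico_id_eq_factorial, Finset.Ico_add_one_right_eq_Icc, ← hunion, Finset.prod_union hdis,
    Finset.prod_image hinj1, Finset.prod_image hinj2]

lemma hookProd_eq {p : ℕ} {a : YoungDiagram} (ha : a.rowLen p = 0) :
    hookProd a = ∏ i ∈ Finset.range p, ∏ j ∈ Finset.range (a.rowLen i), hookLen a (i, j) := by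
  rw [hookProd]
  apply Finset.prod_finset_product
  rintro ⟨i, j⟩
  rw [YoungDiagram.mem_cells, YoungDiagram.mem_iff_lt_rowLen]
  simp only [Finset.mem_range]
  constructor
  · intro h
    refine ⟨?_, h⟩
    by_contra hh
    rw [rowLen_zero_of_le ha (not_lt.1 hh)] at h
    omega
  · exact fun h => h.2

/-- Vandermonde of shifted row lengths -/
def VV (p : ℕ) (a : YoungDiagram) : ℕ :=
  ∏ i ∈ Finset.range p, ∏ k ∈ Finset.Ioo i p, (ln p a i - ln p a k)

lemma hookProd_mul_VV {p : ℕ} {a : YoungDiagram} (ha : a.rowLen p = 0) :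
    hookProd a * VV p a = ∏ i ∈ Finset.range p, (ln p a i).factorial := by
  rw [hookProd_eq ha, VV, ← Finset.prod_mul_distrib]
  exact Finset.prod_congr rfl fun i hi => hook_row ha (Finset.mem_range.1 hi)

lemma VV_ne_zero {p : ℕ} {a : YoungDiagram} (ha : a.rowLen p = 0) : VV p a ≠ 0 := by
  intro h
  have := hookProd_mul_VV ha
  rw [h, mul_zero] at this
  exact (Finset.prod_ne_zero_iff.2 fun i _ => Nat.factorial_ne_zero _) this.symm

lemma hookProd_ne_zero (a : YoungDiagram) : hookProd a ≠ 0 := by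
  have ha : a.rowLen (a.colLen 0) = 0 := by
    by_contra h
    have := lt_colLen_iff.2 (Nat.pos_of_ne_zero h)
    omega
  intro h
  have := hookProd_mul_VV ha
  rw [h, zero_mul] at this
  exact (Finset.prod_ne_zero_iff.2 fun i _ => Nat.factorial_ne_zero _) this.symm

lemma numSSYT_VV {p : ℕ} {a : YoungDiagram} (ha : a.rowLen p = 0) :
    (∏ i ∈ Finset.range p, (p - 1 - i).factorial) * numSSYT a p = VV p a := by
  have h := Dl_vdm (LL p a)
  rw [← numSSYT_eq_Dl p a ha] at h
  rw [Finset.prod_range_reflect (fun i => Nat.factorial i) p]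
  rw [← Fin.prod_univ_eq_prod_range (fun i => Nat.factorial i) p]
  zify
  rw [h, VV]
  push_cast
  rw [← Fin.prod_univ_eq_prod_range
    (fun i => ∏ k ∈ Finset.Ioo i p, ((ln p a i - ln p a k : ℕ) : ℤ)) p]
  refine Finset.prod_congr rfl fun i _ => ?_
  rw [← Fin.map_valEmbedding_Ioi, Finset.prod_map]
  refine Finset.prod_congr rfl fun k hk => ?_
  have hk' : (i : ℕ) < k := by simpa using hk
  have := a.rowLen_anti i k hk'.le
  simp only [LL, ln, Fin.valEmbedding_apply]
  omega

lemma pochRe_fact (n i m : ℕ) (h : i < n) :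
    pochRe ((n : ℝ) - i) m * ((n - 1 - i).factorial : ℝ) = ((m + (n - 1 - i)).factorial : ℝ) := by
  induction m with
  | zero => simp [pochRe]
  | succ m ih =>
    rw [pochRe, Finset.prod_range_succ, ← pochRe, mul_right_comm, ih,
      show m + 1 + (n - 1 - i) = (m + (n - 1 - i)) + 1 by omega, Nat.factorial_succ]
    have : (n : ℝ) - i + m = ((m + (n - 1 - i) + 1 : ℕ) : ℝ) := by
      rw [show m + (n - 1 - i) + 1 = n + m - i by omega, Nat.cast_sub (by omega)]
      push_cast; ring
    rw [this]; push_cast; ring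

lemma pochPart_eq {p : ℕ} {a : YoungDiagram} (ha : a.rowLen p = 0) (x : ℝ) :
    pochPart x a = ∏ i ∈ Finset.range p, pochRe (x - i) (a.rowLen i) := by
  rw [pochPart]
  apply Finset.prod_subset
  · intro i hi
    simp only [Finset.mem_range, lt_colLen_iff] at hi ⊢
    by_contra hh
    rw [rowLen_zero_of_le ha (not_lt.1 hh)] at hi
    omega
  · intro i _ hi
    simp only [Finset.mem_range, lt_colLen_iff] at hi
    have : a.rowLen i = 0 := by omega
    simp [this, pochRe]

lemma pochPart_zero {p : ℕ} {a : YoungDiagram} (ha : a.rowLen p ≠ 0) :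
    pochPart (p : ℝ) a = 0 := by
  rw [pochPart]
  apply Finset.prod_eq_zero (i := p)
  · rw [Finset.mem_range, lt_colLen_iff]
    omega
  · rw [pochRe]
    apply Finset.prod_eq_zero (i := 0)
    · rw [Finset.mem_range]; omega
    · simp

lemma pochPart_fact {p n : ℕ} (hpn : p ≤ n) {a : YoungDiagram} (ha : a.rowLen p = 0) :
    pochPart (n : ℝ) a * ∏ i ∈ Finset.range p, ((n - 1 - i).factorial : ℝ) =
      ∏ i ∈ Finset.range p, ((ln n a i).factorial : ℝ) := by
  rw [pochPart_eq ha, ← Finset.prod_mul_distrib]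
  refine Finset.prod_congr rfl fun i hi => ?_
  rw [Finset.mem_range] at hi
  exact pochRe_fact n i _ (by omega)

lemma numSSYT_zero {p : ℕ} {a : YoungDiagram} (ha : a.rowLen p ≠ 0) : numSSYT a p = 0 := by
  rw [numSSYT_eq_BT]
  have : BT a p = ∅ := by
    ext T
    simp only [Set.mem_empty_iff_false, iff_false]
    intro hT
    have hm : (p, 0) ∈ a := YoungDiagram.mem_iff_lt_rowLen.2 (Nat.pos_of_ne_zero ha)
    have := BT_iff.1 hT _ _ hm
    have := ssyt_ge T hm
    omega
  rw [this, Set.ncard_empty]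

/-- hook content formula -/
lemma hook_content (p : ℕ) (a : YoungDiagram) :
    (numSSYT a p : ℝ) * hookProd a = pochPart (p : ℝ) a := by
  by_cases ha : a.rowLen p = 0
  · have h1 := numSSYT_VV ha
    have h2 := hookProd_mul_VV ha
    have h3 := pochPart_fact le_rfl ha
    rw [← h1] at h2
    have h2' := congrArg (Nat.cast : ℕ → ℝ) h2
    push_cast at h2'
    rw [← h2'] at h3
    have h4 : (∏ i ∈ Finset.range p, ((p - 1 - i).factorial : ℝ)) ≠ 0 :=
      Finset.prod_ne_zero_iff.2 fun i _ => Nat.cast_ne_zero.2 (Nat.factorial_ne_zero _)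
    apply mul_right_cancel₀ h4
    rw [h3]; ring
  · rw [pochPart_zero ha, numSSYT_zero ha]; simp

lemma card_eq {p : ℕ} {a : YoungDiagram} (ha : a.rowLen p = 0) :
    a.card = ∑ i ∈ Finset.range p, a.rowLen i := by
  have h : ∑ c ∈ a.cells, 1 = ∑ i ∈ Finset.range p, ∑ j ∈ Finset.range (a.rowLen i), 1 := by
    apply Finset.sum_finset_product
    rintro ⟨i, j⟩
    rw [YoungDiagram.mem_cells, YoungDiagram.mem_iff_lt_rowLen]
    simp only [Finset.mem_range]
    constructor
    · intro h
      refine ⟨?_, h⟩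
      by_contra hh
      rw [rowLen_zero_of_le ha (not_lt.1 hh)] at h
      omega
    · exact fun h => h.2
  simpa using h

lemma shift_anti (a : YoungDiagram) (m : ℕ) : Antitone (fun i => a.rowLen i + m) :=
  fun i j h => Nat.add_le_add_right (a.rowLen_anti i j h) m

/-- adding `m` columns of length `p` -/
def shiftD (p m : ℕ) (a : YoungDiagram) : YoungDiagram :=
  ofFun p (fun i => a.rowLen i + m) (shift_anti a m)

lemma shiftD_rowLen {p m : ℕ} {a : YoungDiagram} {i : ℕ} (hi : i < p) :
    (shiftD p m a).rowLen i = a.rowLen i + m := by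
  rw [shiftD, rowLen_ofFun, if_pos hi]

lemma shiftD_rowLen_p {p m : ℕ} {a : YoungDiagram} : (shiftD p m a).rowLen p = 0 := by
  rw [shiftD, rowLen_ofFun, if_neg (lt_irrefl _)]

lemma shiftD_card {p m : ℕ} {a : YoungDiagram} (ha : a.rowLen p = 0) :
    (shiftD p m a).card = a.card + p * m := by
  rw [card_eq ha, card_eq shiftD_rowLen_p]
  rw [Finset.sum_congr rfl fun i hi => shiftD_rowLen (Finset.mem_range.1 hi)]
  simp [Finset.sum_add_distrib]

lemma shiftD_ln {p m : ℕ} {a : YoungDiagram} {i : ℕ} (hi : i < p) :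
    ln p (shiftD p m a) i = ln (p + m) a i := by
  rw [ln, shiftD_rowLen hi, ln]
  omega

lemma shiftD_VV {p m : ℕ} {a : YoungDiagram} : VV p (shiftD p m a) = VV p a := by
  refine Finset.prod_congr rfl fun i hi => Finset.prod_congr rfl fun k hk => ?_
  rw [Finset.mem_range] at hi
  rw [Finset.mem_Ioo] at hk
  rw [shiftD_ln hi, shiftD_ln hk.2]
  simp only [ln]
  omega

lemma strip_row (d M r : ℕ) (h : r ≤ M) :
    (∏ j ∈ Finset.Ico (M - r) M, (d + M - j)) * d.factorial = (d + r).factorial := by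
  induction r with
  | zero => simp
  | succ r ih =>
    rw [Finset.prod_eq_prod_Ico_succ_bot (by omega), show M - (r + 1) + 1 = M - r by omega,
      mul_assoc, ih (by omega), ← add_assoc, Nat.factorial_succ]
    congr 1
    omega

lemma shiftD_colLen {p m : ℕ} {a : YoungDiagram} {j : ℕ} (hj : j < m) :
    (shiftD p m a).colLen j = p := by
  apply eq_of_forall_lt_iff
  intro i
  rw [lt_colLen_iff, shiftD, rowLen_ofFun]
  split_ifs with h
  · simp [h]; omega
  · simp [h]

lemma Hstrip_shift {p q n : ℕ} (hpq : p ≤ q) (hqn : q ≤ n) {a : YoungDiagram} :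
    Hstrip n p q (shiftD p (n - p) a) * ∏ i ∈ Finset.range p, (ln p a i).factorial =
      ∏ i ∈ Finset.range p, (ln q a i).factorial := by
  have h : Hstrip n p q (shiftD p (n - p) a) = ∏ i ∈ Finset.range p,
      ∏ j ∈ Finset.Ico (n - q) (n - p), hookLen (shiftD p (n - p) a) (i, j) := by
    rw [Hstrip]
    apply Finset.prod_finset_product
    rintro ⟨i, j⟩
    rw [Finset.mem_filter, YoungDiagram.mem_cells, YoungDiagram.mem_iff_lt_rowLen, shiftD,
      rowLen_ofFun]
    simp only [Finset.mem_range, Finset.mem_Ico]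
    split_ifs <;> omega
  rw [h, ← Finset.prod_mul_distrib]
  refine Finset.prod_congr rfl fun i hi => ?_
  rw [Finset.mem_range] at hi
  have h2 := strip_row (ln p a i) (n - p) (q - p) (by omega)
  rw [show n - p - (q - p) = n - q by omega] at h2
  have h3 : ln p a i + (q - p) = ln q a i := by simp only [ln]; omega
  rw [← h3, ← h2]
  congr 1
  refine Finset.prod_congr rfl fun j hj => ?_
  rw [Finset.mem_Ico] at hj
  simp only [hookLen]
  rw [shiftD_rowLen hi, shiftD_colLen hj.2, ln]
  omega

/-- coefficient on the right -/
def Fc (p q n : ℕ) (a : YoungDiagram) : ℝ :=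
  pochPart (p : ℝ) a * pochPart (q : ℝ) a / (((hookProd a : ℝ)) ^ 2 * pochPart (n : ℝ) a)

/-- coefficient on the left -/
def Gc (p q n : ℕ) (a : YoungDiagram) : ℝ :=
  pochPart (p : ℝ) a / (hookProd a : ℝ) ^ 2 * (indSup n p a * (Hstrip n p q a : ℝ))

/-- constant -/
def Cc (p q n : ℕ) : ℝ := ∏ i ∈ Finset.Icc 1 p,
  (Nat.factorial (q - i) : ℝ) / (Nat.factorial (n - i) : ℝ)

lemma Cc_eq (p q n : ℕ) : Cc p q n = (∏ i ∈ Finset.range p, (Nat.factorial (q - 1 - i) : ℝ)) /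
    ∏ i ∈ Finset.range p, (Nat.factorial (n - 1 - i) : ℝ) := by
  rw [← Finset.prod_div_distrib, Cc, ← Finset.Ico_add_one_right_eq_Icc, Finset.prod_Ico_eq_prod_range]
  refine Finset.prod_congr (by simp) fun i _ => ?_
  rw [Nat.sub_sub, Nat.sub_sub]

lemma prodfact_ne (p : ℕ) (f : ℕ → ℕ) : (∏ i ∈ Finset.range p, ((f i).factorial : ℝ)) ≠ 0 :=
  Finset.prod_ne_zero_iff.2 fun i _ => Nat.cast_ne_zero.2 (Nat.factorial_ne_zero _)

lemma Gc_shift {p q n : ℕ} (hpq : p ≤ q) (hqn : q ≤ n) {a : YoungDiagram} (ha : a.rowLen p = 0) :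
    Gc p q n (shiftD p (n - p) a) = Cc p q n * Fc p q n a := by
  have e1 := congrArg (Nat.cast : ℕ → ℝ) (Hstrip_shift hpq hqn (a := a))
  have e2 := congrArg (Nat.cast : ℕ → ℝ) (hookProd_mul_VV ha)
  have e3 := congrArg (Nat.cast : ℕ → ℝ) (hookProd_mul_VV (shiftD_rowLen_p (p := p) (m := n - p) (a := a)))
  have e4 := pochPart_fact le_rfl (shiftD_rowLen_p (p := p) (m := n - p) (a := a))
  have e5 := pochPart_fact le_rfl ha
  have e6 := pochPart_fact hpq ha
  have e7 := pochPart_fact (hpq.trans hqn) ha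
  have e8 : ∀ i ∈ Finset.range p, ln p (shiftD p (n - p) a) i = ln n a i := by
    intro i hi
    rw [shiftD_ln (Finset.mem_range.1 hi), Nat.add_sub_cancel' (hpq.trans hqn)]
  have hind : indSup n p (shiftD p (n - p) a) = 1 := by
    rw [indSup, if_pos]
    intro i hi
    rw [shiftD_rowLen hi]
    omega
  push_cast at e1 e2 e3
  have e9 : ∏ i ∈ Finset.range p, ((ln p (shiftD p (n - p) a) i).factorial : ℝ) =
      ∏ i ∈ Finset.range p, ((ln n a i).factorial : ℝ) :=
    Finset.prod_congr rfl fun i hi => by rw [e8 i hi]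
  rw [e9] at e3 e4
  rw [shiftD_VV] at e3
  have hV : (VV p a : ℝ) ≠ 0 := Nat.cast_ne_zero.2 (VV_ne_zero ha)
  have n1 := prodfact_ne p (fun i => ln p a i)
  have n2 := prodfact_ne p (fun i => ln q a i)
  have n3 := prodfact_ne p (fun i => ln n a i)
  have n4 := prodfact_ne p (fun i => p - 1 - i)
  have n5 := prodfact_ne p (fun i => q - 1 - i)
  have n6 := prodfact_ne p (fun i => n - 1 - i)
  rw [Gc, Fc, Cc_eq, hind]
  set Ap := ∏ i ∈ Finset.range p, ((ln p a i).factorial : ℝ)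
  set Aq := ∏ i ∈ Finset.range p, ((ln q a i).factorial : ℝ)
  set An := ∏ i ∈ Finset.range p, ((ln n a i).factorial : ℝ)
  set Sp := ∏ i ∈ Finset.range p, ((p - 1 - i).factorial : ℝ)
  set Sq := ∏ i ∈ Finset.range p, ((q - 1 - i).factorial : ℝ)
  set Sn := ∏ i ∈ Finset.range p, ((n - 1 - i).factorial : ℝ)
  rw [eq_div_of_mul_eq n1 e1, eq_div_of_mul_eq hV e2, eq_div_of_mul_eq hV e3,
    eq_div_of_mul_eq n4 e4, eq_div_of_mul_eq n4 e5, eq_div_of_mul_eq n5 e6,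
    eq_div_of_mul_eq n6 e7]
  field_simp

lemma summable_pi_prod (f : ℕ → ℝ) (h0 : ∀ k, 0 ≤ f k) (hf : Summable f) (p : ℕ) :
    Summable (fun v : Fin p → ℕ => ∏ i, f (v i)) := by
  induction p with
  | zero => exact Summable.of_finite
  | succ p ih =>
    rw [← (Fin.consEquiv (fun _ : Fin (p + 1) => ℕ)).summable_iff]
    have := hf.mul_of_nonneg ih h0 (fun v => Finset.prod_nonneg fun i _ => h0 _)
    refine this.congr fun x => ?_
    simp [Fin.consEquiv, Fin.prod_univ_succ]

lemma hookProd_ge {p : ℕ} {a : YoungDiagram} (ha : a.rowLen p = 0) :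
    ∏ i ∈ Finset.range p, (a.rowLen i).factorial ≤ hookProd a := by
  rw [hookProd_eq ha]
  refine Finset.prod_le_prod' fun i _ => ?_
  rw [← Finset.prod_range_add_one_eq_factorial,
    ← Finset.prod_range_reflect (fun i => i + 1)]
  refine Finset.prod_le_prod' fun j hj => ?_
  rw [Finset.mem_range] at hj
  have := lt_colLen_iff.2 hj
  simp only [hookLen]
  omega

lemma pochRe_pos {x : ℝ} (hx : 0 < x) (m : ℕ) : 0 < pochRe x m :=
  Finset.prod_pos fun j _ => by positivity

lemma pochRe_mono {x y : ℝ} (hx : 0 < x) (hxy : x ≤ y) (m : ℕ) : pochRe x m ≤ pochRe y m :=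
  Finset.prod_le_prod (fun j _ => by positivity) fun j _ => by linarith

lemma pochRe_le {p : ℕ} (hp : 1 ≤ p) {x : ℝ} (hx : 0 < x) (hxp : x ≤ p) (m : ℕ) :
    pochRe x m ≤ (p : ℝ) ^ m * (m.factorial : ℝ) := by
  rw [← Finset.prod_range_add_one_eq_factorial]
  push_cast
  rw [pochRe, ← Finset.card_range m, ← Finset.prod_const, Finset.card_range,
    ← Finset.prod_mul_distrib]
  refine Finset.prod_le_prod (fun j _ => by positivity) fun j _ => ?_
  have h1 : (1 : ℝ) ≤ p := by exact_mod_cast hp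
  have h2 : (0 : ℝ) ≤ j := Nat.cast_nonneg j
  nlinarith

lemma idx_pos {p i n : ℕ} (hi : i ∈ Finset.range p) (h : p ≤ n) : (0 : ℝ) < (n : ℝ) - i := by
  rw [Finset.mem_range] at hi
  have : (i : ℝ) < n := by exact_mod_cast (by omega : i < n)
  linarith

lemma Fc_bound {p q n : ℕ} (hp : 1 ≤ p) (hpq : p ≤ q) (hqn : q ≤ n) {a : YoungDiagram}
    (ha : a.rowLen p = 0) :
    0 ≤ Fc p q n a ∧ Fc p q n a ≤
      ∏ i ∈ Finset.range p, ((p : ℝ) ^ (a.rowLen i) / ((a.rowLen i).factorial : ℝ)) := by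
  have hP : 0 < pochPart (p : ℝ) a := by
    rw [pochPart_eq ha]
    exact Finset.prod_pos fun i hi => pochRe_pos (idx_pos hi le_rfl) _
  have hQ : 0 < pochPart (q : ℝ) a := by
    rw [pochPart_eq ha]
    exact Finset.prod_pos fun i hi => pochRe_pos (idx_pos hi hpq) _
  have hQN : pochPart (q : ℝ) a ≤ pochPart (n : ℝ) a := by
    rw [pochPart_eq ha, pochPart_eq ha]
    refine Finset.prod_le_prod (fun i hi => (pochRe_pos (idx_pos hi hpq) _).le) fun i hi =>
      pochRe_mono (idx_pos hi hpq) ?_ _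
    have : (q : ℝ) ≤ n := by exact_mod_cast hqn
    linarith
  have hN : 0 < pochPart (n : ℝ) a := hQ.trans_le hQN
  have hH : 0 < (hookProd a : ℝ) := by
    exact_mod_cast Nat.pos_of_ne_zero (hookProd_ne_zero a)
  have hHge : ∏ i ∈ Finset.range p, ((a.rowLen i).factorial : ℝ) ≤ hookProd a := by
    exact_mod_cast hookProd_ge ha
  have hA : 0 < ∏ i ∈ Finset.range p, ((a.rowLen i).factorial : ℝ) :=
    Finset.prod_pos fun i _ => by exact_mod_cast Nat.factorial_pos _
  have hPle : pochPart (p : ℝ) a ≤ (∏ i ∈ Finset.range p, (p : ℝ) ^ (a.rowLen i)) *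
      ∏ i ∈ Finset.range p, ((a.rowLen i).factorial : ℝ) := by
    rw [pochPart_eq ha, ← Finset.prod_mul_distrib]
    refine Finset.prod_le_prod (fun i hi => (pochRe_pos (idx_pos hi le_rfl) _).le) fun i hi =>
      pochRe_le hp (idx_pos hi le_rfl) ?_ _
    have : (0 : ℝ) ≤ i := Nat.cast_nonneg i
    linarith
  refine ⟨by rw [Fc]; positivity, ?_⟩
  rw [Finset.prod_div_distrib, Fc]
  set A := ∏ i ∈ Finset.range p, ((a.rowLen i).factorial : ℝ)
  set B := ∏ i ∈ Finset.range p, (p : ℝ) ^ (a.rowLen i)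
  have hB : 0 ≤ B := Finset.prod_nonneg fun i _ => by positivity
  calc _ ≤ (B * A) * pochPart (n : ℝ) a / (A ^ 2 * pochPart (n : ℝ) a) := by gcongr
    _ = B / A := by field_simp

lemma summable_Fc {p q n : ℕ} (hp : 1 ≤ p) (hpq : p ≤ q) (hqn : q ≤ n) (x : ℝ) :
    Summable (fun a : {a : YoungDiagram // a.rowLen p = 0} => x ^ a.1.card * Fc p q n a.1) := by
  have h1 : Summable (fun k : ℕ => (p * |x|) ^ k / (k.factorial : ℝ)) :=
    Real.summable_pow_div_factorial _
  have h2 := summable_pi_prod _ (fun k => by positivity) h1 p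
  have hinj : Function.Injective
      (fun (a : {a : YoungDiagram // a.rowLen p = 0}) (i : Fin p) => a.1.rowLen i) := by
    intro a b h
    apply Subtype.ext
    apply LL_inj a.2 b.2
    ext i
    have := congrFun h i
    simp only at this
    rw [LL, LL, this]
  have h3 := h2.comp_injective hinj
  refine Summable.of_norm_bounded h3 fun a => ?_
  obtain ⟨b1, b2⟩ := Fc_bound hp hpq hqn a.2
  rw [Real.norm_eq_abs, abs_mul, abs_pow, abs_of_nonneg b1]
  simp only [Function.comp]
  rw [Fin.prod_univ_eq_prod_range
    (fun i => ((p : ℝ) * |x|) ^ (a.1.rowLen i) / ((a.1.rowLen i).factorial : ℝ)) p]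
  calc _ ≤ |x| ^ a.1.card * _ := mul_le_mul_of_nonneg_left b2 (by positivity)
    _ = _ := by
      rw [card_eq a.2, ← Finset.prod_pow_eq_pow_sum, ← Finset.prod_mul_distrib]
      refine Finset.prod_congr rfl fun i _ => ?_
      rw [mul_pow]; ring

lemma hasSum_fiber {f : YoungDiagram → ℝ} {s : ℝ} (hf : HasSum f s) :
    HasSum (fun k : ℕ => ∑' a : YoungDiagram, if a.card = k then f a else 0) s := by
  have h := hf.tsum_fiberwise (fun a : YoungDiagram => a.card)
  have key : (fun k : ℕ => ∑' a : YoungDiagram, if a.card = k then f a else 0) =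
      fun k : ℕ => ∑' b : (fun a : YoungDiagram => a.card) ⁻¹' {k}, f b := by
    funext k
    rw [tsum_subtype ((fun a : YoungDiagram => a.card) ⁻¹' {k}) f]
    refine tsum_congr fun a => ?_
    by_cases hk : a.card = k
    · rw [if_pos hk, Set.indicator_of_mem (by simpa using hk)]
    · rw [if_neg hk, Set.indicator_of_notMem (by simpa using hk)]
  rw [key]
  exact h

lemma shift_surj {p n : ℕ} {b : YoungDiagram} (hb : b.rowLen p = 0)
    (h : ∀ i < p, n - p ≤ b.rowLen i) :
    ∃ a : YoungDiagram, a.rowLen p = 0 ∧ shiftD p (n - p) a = b := by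
  have hanti : Antitone (fun i => b.rowLen i - (n - p)) :=
    fun i j hij => Nat.sub_le_sub_right (b.rowLen_anti i j hij) _
  refine ⟨ofFun p _ hanti, by simp [rowLen_ofFun], ?_⟩
  apply yd_ext
  intro i
  rcases lt_or_ge i p with hi | hi
  · rw [shiftD_rowLen hi, rowLen_ofFun, if_pos hi]
    have := h i hi
    omega
  · rw [rowLen_zero_of_le hb hi, rowLen_zero_of_le shiftD_rowLen_p hi]

lemma Gc_eq_zero {p q n : ℕ} {b : YoungDiagram}
    (h : ¬ (b.rowLen p = 0 ∧ ∀ i < p, n - p ≤ b.rowLen i)) : Gc p q n b = 0 := by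
  rw [Gc]
  by_cases hb : b.rowLen p = 0
  · rw [indSup, if_neg (fun h' => h ⟨hb, h'⟩)]
    simp
  · rw [pochPart_zero hb]
    simp

lemma Gc_eq_zero_of_lt {p q n : ℕ} {b : YoungDiagram} (h : b.card < p * (n - p)) :
    Gc p q n b = 0 := by
  apply Gc_eq_zero
  rintro ⟨h1, h2⟩
  obtain ⟨a, ha, rfl⟩ := shift_surj h1 h2
  rw [shiftD_card ha] at h
  omega

lemma hasSum_F {p q n : ℕ} (hp : 1 ≤ p) (hpq : p ≤ q) (hqn : q ≤ n) (x : ℝ) :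
    ∃ s : ℝ, HasSum (fun a : YoungDiagram => x ^ a.card * Fc p q n a) s ∧
      HasSum (fun a : YoungDiagram => x ^ a.card * Gc p q n a)
        (Cc p q n * x ^ (p * (n - p)) * s) := by
  obtain ⟨s, hs⟩ := summable_Fc hp hpq hqn x
  refine ⟨s, ?_, ?_⟩
  · refine (Function.Injective.hasSum_iff
      (g := (Subtype.val : {a : YoungDiagram // a.rowLen p = 0} → YoungDiagram))
      Subtype.val_injective ?_).1 hs
    intro a ha
    have : a.rowLen p ≠ 0 := by simpa using ha
    rw [Fc, pochPart_zero this]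
    simp
  · refine (Function.Injective.hasSum_iff
      (g := fun a : {a : YoungDiagram // a.rowLen p = 0} => shiftD p (n - p) a.1) ?_ ?_).1 ?_
    · intro a b h
      apply Subtype.ext
      apply LL_inj a.2 b.2
      ext i
      have h1 := congrArg (fun d : YoungDiagram => d.rowLen i) h
      simp only [shiftD_rowLen i.2] at h1
      simp only [LL]
      omega
    · intro b hb
      rw [Gc_eq_zero, mul_zero]
      rintro ⟨h1, h2⟩
      obtain ⟨a, ha, rfl⟩ := shift_surj h1 h2
      exact hb ⟨⟨a, ha⟩, rfl⟩
    · convert! hs.mul_left (Cc p q n * x ^ (p * (n - p))) using 2 with a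
      simp only [Function.comp]
      rw [Gc_shift hpq hqn a.2, shiftD_card a.2, pow_add]
      ring

lemma lhs_term {p q n : ℕ} (hp : 1 ≤ p) (x : ℝ) (ℓ : ℕ) :
    (if p * (n - p) ≤ ℓ then
        ((p : ℝ) * x) ^ ℓ / (Nat.factorial ℓ : ℝ) *
          Eword ℓ p (fun lam => indSup n p lam * (Hstrip n p q lam : ℝ))
      else 0) =
    ∑' a : YoungDiagram, if a.card = ℓ then x ^ a.card * Gc p q n a else 0 := by
  split_ifs with h
  · rw [Eword, ← tsum_mul_left]
    refine tsum_congr fun a => ?_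
    split_ifs with hc
    · subst hc
      have h1 : (hookProd a : ℝ) ≠ 0 := Nat.cast_ne_zero.2 (hookProd_ne_zero a)
      have h2 : (a.card.factorial : ℝ) ≠ 0 := Nat.cast_ne_zero.2 (Nat.factorial_ne_zero _)
      have h3 : (p : ℝ) ≠ 0 := Nat.cast_ne_zero.2 (by omega)
      rw [Pword, fSYT, Gc, ← hook_content, mul_pow]
      field_simp
    · simp
  · symm
    refine (tsum_congr fun a => ?_).trans tsum_zero
    split_ifs with hc
    · rw [Gc_eq_zero_of_lt (by omega), mul_zero]
    · rfl

lemma rhs_term (p q n : ℕ) (x : ℝ) (k : ℕ) :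
    (x ^ k * ∑' κ : YoungDiagram,
        (if κ.card = k then
          pochPart (p : ℝ) κ * pochPart (q : ℝ) κ /
            (((hookProd κ : ℝ)) ^ 2 * pochPart (n : ℝ) κ)
        else 0)) =
    ∑' a : YoungDiagram, if a.card = k then x ^ a.card * Fc p q n a else 0 := by
  rw [← tsum_mul_left]
  refine tsum_congr fun a => ?_
  split_ifs with hc
  · rw [hc, Fc]
  · simp

/-- the generating function identity for
`Σ_{ℓ ≥ p(n−p)} ((px)^ℓ/ℓ!) E^{ℓ,p}(1_{λ⊇μ} H(λ))` in terms of the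
hypergeometric-type series `Σ_k x^k Σ_{κ ⊢ k} (p)_κ (q)_κ / ((h^κ)² (n)_κ)`. -/
theorem statement0 (p q n : ℕ) (hp : 1 ≤ p) (hpq : p ≤ q) (hqn : q ≤ n) (x : ℝ) :
    Summable (fun ℓ : ℕ =>
      if p * (n - p) ≤ ℓ then
        ((p : ℝ) * x) ^ ℓ / (Nat.factorial ℓ : ℝ) *
          Eword ℓ p (fun lam => indSup n p lam * (Hstrip n p q lam : ℝ))
      else 0) ∧
    Summable (fun k : ℕ =>
      x ^ k * ∑' κ : YoungDiagram,
        (if κ.card = k then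
          pochPart (p : ℝ) κ * pochPart (q : ℝ) κ /
            (((hookProd κ : ℝ)) ^ 2 * pochPart (n : ℝ) κ)
        else 0)) ∧
    (∑' ℓ : ℕ,
      (if p * (n - p) ≤ ℓ then
        ((p : ℝ) * x) ^ ℓ / (Nat.factorial ℓ : ℝ) *
          Eword ℓ p (fun lam => indSup n p lam * (Hstrip n p q lam : ℝ))
      else 0)) =
      (∏ i ∈ Finset.Icc 1 p,
          (Nat.factorial (q - i) : ℝ) / (Nat.factorial (n - i) : ℝ)) *
        x ^ (p * (n - p)) *
        ∑' k : ℕ,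
          x ^ k * ∑' κ : YoungDiagram,
            (if κ.card = k then
              pochPart (p : ℝ) κ * pochPart (q : ℝ) κ /
                (((hookProd κ : ℝ)) ^ 2 * pochPart (n : ℝ) κ)
            else 0) := by
  obtain ⟨s, h1, h2⟩ := hasSum_F hp hpq hqn x
  have h1' := hasSum_fiber h1
  have h2' := hasSum_fiber h2
  simp only [lhs_term hp, rhs_term]
  refine ⟨h2'.summable, h1'.summable, ?_⟩
  rw [h1'.tsum_eq, h2'.tsum_eq]
  rfl

end
end

section
/- Let 1 ≤ p ≤ q ≤ n be integers, μ = (n−p)^p, and define the entire function G(x) := Σ_{ℓ ≥ p(n−p)} ((px)^ℓ/ℓ!) · E^{ℓ,p}(1_{λ⊇μ} · H(λ)). Set u(x) := x·G′(x)/G(x) − p·x on the interval where G(x) ≠ 0. Then u extends analytically to a neighborhood of x = 0 with u(0) = p(n−p) and u′(0) = −p(n−q)/n, and u satisfies the Painlevé V type equation x²u‴ + xu″ + 6x(u′)² − 4uu′ + 4Q(x)u′ − 2Q′(x)u + 2R(x) = 0, where 4Q(x) = −x² + 2(n+2(p−q))x − (n−2p)² and 2R(x) = p(p−q)(x + n −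 2p). -/
open MeasureTheory Filter Real
open scoped BigOperators Topology

noncomputable section

/-- The entire function `G(x) = Σ_{ℓ ≥ p(n−p)} ((px)^ℓ/ℓ!) E^{ℓ,p}(1_{λ⊇μ} H(λ))`. -/
def Gfun (p q n : ℕ) (x : ℝ) : ℝ :=
  ∑' ℓ : ℕ,
    if p * (n - p) ≤ ℓ then
      ((p : ℝ) * x) ^ ℓ / (Nat.factorial ℓ : ℝ) *
        Eword ℓ p (fun lam => indSup n p lam * (Hstrip n p q lam : ℝ))
    else 0

set_option linter.unusedSimpArgs false

namespace PainA

variable {A : Type*} [CommRing A]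

/-- Darboux reduced functions -/
def rr (D : Derivation ℤ A A) (f : ℕ → A) : ℕ → ℕ → A
  | 0, m => f m
  | N + 1, m => D (rr D f N m) - D (rr D f N N) * Ring.inverse (rr D f N N) * rr D f N m

def ss (D : Derivation ℤ A A) (f : ℕ → A) (N : ℕ) : A :=
  D (rr D f N N) * Ring.inverse (rr D f N N)

lemma rr_succ (D : Derivation ℤ A A) (f : ℕ → A) (N m : ℕ) :
    rr D f (N + 1) m = D (rr D f N m) - ss D f N * rr D f N m := rfl

def cc (D : Derivation ℤ A A) (f : ℕ → A) : ℕ → A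
  | 0 => 0
  | N + 1 => cc D f N + ss D f N

def ee (D : Derivation ℤ A A) (f : ℕ → A) : ℕ → A
  | 0 => 0
  | N + 1 => ee D f N + D (cc D f N) - ss D f N * cc D f N

def gg (D : Derivation ℤ A A) (f : ℕ → A) : ℕ → A
  | 0 => 0
  | N + 1 => gg D f N + D (ee D f N) - ss D f N * ee D f N

lemma cc_succ (D : Derivation ℤ A A) (f : ℕ → A) (N : ℕ) :
    cc D f (N + 1) = cc D f N + ss D f N := rfl
lemma ee_succ (D : Derivation ℤ A A) (f : ℕ → A) (N : ℕ) :
    ee D f (N + 1) = ee D f N + D (cc D f N) - ss D f N * cc D f N := rfl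
lemma gg_succ (D : Derivation ℤ A A) (f : ℕ → A) (N : ℕ) :
    gg D f (N + 1) = gg D f N + D (ee D f N) - ss D f N * ee D f N := rfl

lemma D_rr (D : Derivation ℤ A A) (f : ℕ → A) (N : ℕ) (h : IsUnit (rr D f N N)) :
    D (rr D f N N) = ss D f N * rr D f N N := by
  rw [ss, mul_assoc, Ring.inverse_mul_cancel _ h, mul_one]

lemma rr_diag_zero (D : Derivation ℤ A A) (f : ℕ → A) (N : ℕ) (h : IsUnit (rr D f N N)) :
    rr D f (N + 1) N = 0 := by
  rw [rr_succ, D_rr D f N h, sub_self]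

section Alg
variable (D : Derivation ℤ A A) (f : ℕ → A) (x : A) (hx : D x = 1) (a b : ℕ)

/-- Riccati quantity -/
def Ric (N : ℕ) : A :=
  x * (D (ss D f N) + ss D f N ^ 2) + (b - x + N) * ss D f N - N + cc D f N
    + 2 * x * D (cc D f N) - (a + N)

lemma ric_of (N : ℕ) (hu : IsUnit (rr D f N N))
    (hL : x * D (D (rr D f N N)) + (b - x + N) * D (rr D f N N)
      + (-N + cc D f N + 2 * x * D (cc D f N)) * rr D f N N = (a + N) * rr D f N N) :
    Ric D f x a b N = 0 := by
  have h1 := D_rr D f N hu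
  have h2 : D (D (rr D f N N)) = (D (ss D f N) + ss D f N ^ 2) * rr D f N N := by
    rw [h1, Derivation.leibniz, h1]; simp only [smul_eq_mul]; ring
  rw [h2, h1] at hL
  have : Ric D f x a b N * rr D f N N = 0 := by
    unfold Ric
    linear_combination hL
  exact (hu.mul_left_eq_zero).1 this

include hx in
lemma D_Ric (N : ℕ) : D (Ric D f x a b N) =
    (D (ss D f N) + ss D f N ^ 2) + x * (D (D (ss D f N)) + 2 * ss D f N * D (ss D f N))
     + (b - x + N) * D (ss D f N) - ss D f N + D (cc D f N)
    + 2 * D (cc D f N) + 2 * x * D (D (cc D f N)) := by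
  unfold Ric
  have h2 : D (2 : A) = 0 := by simpa using D.map_natCast 2
  simp only [map_add, map_sub, Derivation.leibniz, smul_eq_mul, hx, Derivation.map_natCast, pow_two, h2]
  ring

include hx in
lemma darboux (hL : ∀ j, x * D (D (f j)) + (b - x) * D (f j) = (a + j) * f j)
    (N : ℕ) (hu : ∀ n < N, IsUnit (rr D f n n)) (m : ℕ) :
    x * D (D (rr D f N m)) + (b - x + N) * D (rr D f N m)
      + (-N + cc D f N + 2 * x * D (cc D f N)) * rr D f N m = (a + m) * rr D f N m := by
  induction N generalizing m with
  | zero =>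
    simp only [rr, cc, map_zero, Nat.cast_zero]
    linear_combination hL m
  | succ N ih =>
    have ih := ih (fun n hn => hu n (by omega))
    have hR := ric_of D f x a b N (hu N (by omega)) (ih N)
    have hDR := D_Ric D f x hx a b N
    rw [hR, map_zero] at hDR
    have h1 := ih m
    have h2 := congrArg D h1
    have hd2 : D (2 : A) = 0 := by simpa using D.map_natCast 2
    simp only [rr_succ, cc_succ]
    simp only [map_add, map_sub, map_neg, Derivation.leibniz, smul_eq_mul, hx, Derivation.map_natCast, hd2,
      Nat.cast_add, Nat.cast_one] at h2 ⊢
    linear_combination h2 - ss D f N * h1 + rr D f N m * hDR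

include hx in
lemma ric_zero (hL : ∀ j, x * D (D (f j)) + (b - x) * D (f j) = (a + j) * f j)
    (N : ℕ) (hu : ∀ n ≤ N, IsUnit (rr D f n n)) : Ric D f x a b N = 0 :=
  ric_of D f x a b N (hu N le_rfl) (darboux D f x hx a b hL N (fun n hn => hu n hn.le) N)

def tt (N : ℕ) : A := cc D f N + x * D (cc D f N)

include hx in
lemma toda_aux (hL : ∀ j, x * D (D (f j)) + (b - x) * D (f j) = (a + j) * f j)
    (N : ℕ) (hu : ∀ n ≤ N, IsUnit (rr D f n n)) (m : ℕ) :
    rr D f (N+1) (m+1) - (x * D (D (rr D f (N+1) m)) + (b + (N + 1)) * D (rr D f (N+1) m)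
      + (cc D f (N+1) + 2 * x * D (cc D f (N+1))) * rr D f (N+1) m) =
    D (rr D f N (m+1) - (x * D (D (rr D f N m)) + (b + N) * D (rr D f N m)
      + (cc D f N + 2 * x * D (cc D f N)) * rr D f N m))
    - ss D f N * (rr D f N (m+1) - (x * D (D (rr D f N m)) + (b + N) * D (rr D f N m)
      + (cc D f N + 2 * x * D (cc D f N)) * rr D f N m))
    + (tt D f x (N+1) - tt D f x N) * rr D f N m := by
  have hR := ric_zero D f x hx a b hL N hu
  have hDR := D_Ric D f x hx a b N
  rw [hR, map_zero] at hDR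
  have hd2 : D (2 : A) = 0 := by simpa using D.map_natCast 2
  simp only [rr_succ, cc_succ, tt]
  simp only [map_add, map_sub, map_neg, Derivation.leibniz, smul_eq_mul, hx, Derivation.map_natCast, hd2,
      Nat.cast_add, Nat.cast_one]
  linear_combination -rr D f N m * hDR

lemma toda_of (N : ℕ) (hu : ∀ n ≤ N + 1, IsUnit (rr D f n n))
    (h : rr D f (N+1) (N+1) - (x * D (D (rr D f (N+1) N)) + (b + (N + 1)) * D (rr D f (N+1) N)
      + (cc D f (N+1) + 2 * x * D (cc D f (N+1))) * rr D f (N+1) N) = tt D f x (N+1) * rr D f N N) :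
    D (tt D f x (N+1)) = tt D f x (N+1) * (ss D f (N+1) - ss D f N) := by
  rw [rr_diag_zero D f N (hu N (by omega))] at h
  simp only [map_zero, mul_zero, add_zero, sub_zero] at h
  have h1 := congrArg D h
  rw [D_rr D f (N+1) (hu _ le_rfl), Derivation.leibniz, D_rr D f N (hu _ (by omega)), h] at h1
  simp only [smul_eq_mul] at h1
  have : (D (tt D f x (N+1)) - tt D f x (N+1) * (ss D f (N+1) - ss D f N)) * rr D f N N = 0 := by
    linear_combination -h1
  exact sub_eq_zero.1 (((hu N (by omega)).mul_left_eq_zero).1 this)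

include hx in
lemma toda_rel (hL : ∀ j, x * D (D (f j)) + (b - x) * D (f j) = (a + j) * f j)
    (hR : ∀ j, f (j + 1) = x * D (f j) + (a + j) * f j)
    (N : ℕ) (hu : ∀ n ≤ N, IsUnit (rr D f n n)) (m : ℕ) :
    rr D f (N+1) (m+1) - (x * D (D (rr D f (N+1) m)) + (b + (N + 1)) * D (rr D f (N+1) m)
      + (cc D f (N+1) + 2 * x * D (cc D f (N+1))) * rr D f (N+1) m) = tt D f x (N+1) * rr D f N m := by
  induction N generalizing m with
  | zero =>
    have h0 : rr D f 0 (m+1) - (x * D (D (rr D f 0 m)) + (b + (0:ℕ)) * D (rr D f 0 m)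
      + (cc D f 0 + 2 * x * D (cc D f 0)) * rr D f 0 m) = 0 := by
      simp only [rr, cc, map_zero, Nat.cast_zero]
      rw [hR]
      linear_combination - hL m
    have := toda_aux D f x hx a b hL 0 hu m
    rw [h0] at this
    rw [this]
    simp [tt, cc]
  | succ N ih =>
    have ih := ih (fun n hn => hu n (by omega))
    have ht := toda_of D f x b N hu (ih N)
    have := toda_aux D f x hx a b hL (N+1) hu m
    rw [Nat.cast_add, Nat.cast_one, ih m] at this
    rw [Nat.cast_add, Nat.cast_one, this, Derivation.leibniz, ht]
    simp only [smul_eq_mul]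
    rw [rr_succ D f N m]
    ring

include hx in
lemma K_zero (hL : ∀ j, x * D (D (f j)) + (b - x) * D (f j) = (a + j) * f j)
    (hR : ∀ j, f (j + 1) = x * D (f j) + (a + j) * f j)
    (N : ℕ) (hu : ∀ n ≤ N, IsUnit (rr D f n n)) :
    tt D f x N * cc D f N + x * D (ee D f N) + 2 * ee D f N + D (tt D f x N)
      - ss D f N * tt D f x N = 0 := by
  induction N with
  | zero => simp [tt, cc, ee]
  | succ N ih =>
    have ih := ih (fun n hn => hu n (by omega))
    have ht := toda_of D f x b N hu (toda_rel D f x hx a b hL hR N (fun n hn => hu n (by omega)) N)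
    rw [ht]
    simp only [tt, cc_succ, ee_succ] at *
    simp only [map_add, map_sub, map_neg, Derivation.leibniz, smul_eq_mul, hx] at *
    linear_combination ih

/-- relation (1) -/
def R1 (N : ℕ) : A := x * (2 * ee D f N + D (cc D f N) + cc D f N ^ 2)
  + (b - x + N - 1) * cc D f N - (N * a + N * (N - 1))

lemma R1_zero (N : ℕ) (hric : ∀ n < N, Ric D f x a b n = 0) : R1 D f x a b N = 0 := by
  induction N with
  | zero => simp [R1, cc, ee]
  | succ N ih =>
    have ih := ih (fun n hn => hric n (by omega))
    have h := hric N (by omega)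
    simp only [R1, Ric, cc_succ, ee_succ, map_add, Nat.cast_add, Nat.cast_one] at *
    linear_combination ih + h

include hx in
lemma D_R1 (N : ℕ) : D (R1 D f x a b N) = (2 * ee D f N + D (cc D f N) + cc D f N ^ 2)
  + x * (2 * D (ee D f N) + D (D (cc D f N)) + 2 * cc D f N * D (cc D f N)) - cc D f N
  + (b - x + N - 1) * D (cc D f N) := by
  have hd2 : D (2 : A) = 0 := by simpa using D.map_natCast 2
  simp only [R1, pow_two]
  simp only [map_add, map_sub, map_neg, Derivation.leibniz, smul_eq_mul, hx, Derivation.map_natCast, hd2,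
    Derivation.map_one_eq_zero]
  ring

include hx in
lemma DD_R1 (N : ℕ) : D (D (R1 D f x a b N)) = (2 * D (ee D f N) + D (D (cc D f N)) + 2 * cc D f N * D (cc D f N)) * 2
  + x * (2 * D (D (ee D f N)) + D (D (D (cc D f N))) + 2 * cc D f N * D (D (cc D f N)) + 2 * D (cc D f N) ^ 2)
   - 2 * D (cc D f N)
  + (b - x + N - 1) * D (D (cc D f N)) := by
  have hd2 : D (2 : A) = 0 := by simpa using D.map_natCast 2
  rw [D_R1 D f x hx]
  simp only [pow_two]
  simp only [map_add, map_sub, map_neg, Derivation.leibniz, smul_eq_mul, hx, Derivation.map_natCast, hd2,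
    Derivation.map_one_eq_zero]
  ring

/-- relation (4) -/
def R4 (N : ℕ) : A := -2 * ee D f N + 3 * gg D f N + x * D (D (ee D f N)) + 2 * x * D (gg D f N)
  + (b - x + N) * D (ee D f N) + cc D f N * ee D f N + 2 * x * D (cc D f N) * ee D f N

include hx in
lemma R4_zero (N : ℕ) (hric : ∀ n < N, Ric D f x a b n = 0) : R4 D f x b N = 0 := by
  induction N with
  | zero => simp [R4, cc, ee, gg]
  | succ N ih =>
    have ih := ih (fun n hn => hric n (by omega))
    have h := hric N (by omega)
    have h1 := R1_zero D f x a b N (fun n hn => hric n (by omega))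
    have hD := D_Ric D f x hx a b N
    have hD1 := D_R1 D f x hx a b N
    have hDD1 := DD_R1 D f x hx a b N
    rw [h, map_zero] at hD
    rw [h1, map_zero] at hD1
    rw [h1, map_zero, map_zero] at hDD1
    simp only [R4, cc_succ, ee_succ, gg_succ] at *
    simp only [map_add, map_sub, map_neg, Derivation.leibniz, smul_eq_mul, Nat.cast_add, Nat.cast_one] at *
    linear_combination ih - hDD1 + ss D f N * hD1 + cc D f N * hD

/-- relation (3) -/
def R3 (N : ℕ) : A :=
  x ^ 2 * (D (D (cc D f N)) + D (ee D f N) + 2 * cc D f N * D (cc D f N)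
     + 2 * (D (ee D f N) + gg D f N + cc D f N * ee D f N)
     + (D (cc D f N) + ee D f N + cc D f N ^ 2) * cc D f N + gg D f N)
  + x * (1 + b - x) * (D (cc D f N) + 2 * ee D f N + cc D f N ^ 2)
  + 2 * x * ((N - 1) * (D (cc D f N) + ee D f N + cc D f N ^ 2) + (N - 2) * ee D f N)
  + ((N - 1) * (b + N - 1 - x) - N * x) * cc D f N
  - (a + N - 1) * (x * cc D f N + N * a + N * (N - 1)) + N * a ^ 2 + a * N * (N - 1)

include hx in
lemma R3_zero (hL : ∀ j, x * D (D (f j)) + (b - x) * D (f j) = (a + j) * f j)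
    (hR : ∀ j, f (j + 1) = x * D (f j) + (a + j) * f j)
    (N : ℕ) (hu : ∀ n < N, IsUnit (rr D f n n)) : R3 D f x a b N = 0 := by
  induction N with
  | zero => simp [R3, cc, ee, gg]
  | succ N ih =>
    have ih := ih (fun n hn => hu n (by omega))
    have h := ric_zero D f x hx a b hL N (fun n hn => hu n (by omega))
    have h1 := R1_zero D f x a b N
      (fun n hn => ric_zero D f x hx a b hL n (fun k hk => hu k (by omega)))
    have hK := K_zero D f x hx a b hL hR N (fun n hn => hu n (by omega))
    have hD := D_Ric D f x hx a b N
    have hD1 := D_R1 D f x hx a b N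
    rw [h, map_zero] at hD
    rw [h1, map_zero] at hD1
    simp only [R3, R1, Ric, tt, cc_succ, ee_succ, gg_succ] at *
    simp only [map_add, map_sub, Derivation.leibniz, smul_eq_mul, Nat.cast_add, Nat.cast_one, hx] at *
    linear_combination ih - x * hK - x * hD + (x * ss D f N + N) * h + h1 - 2 * x * hD1

include hx in
lemma D_R3 (N : ℕ) : D (R3 D f x a b N) =
  2 * x * (D (D (cc D f N)) + D (ee D f N) + 2 * cc D f N * D (cc D f N)
     + 2 * (D (ee D f N) + gg D f N + cc D f N * ee D f N)
     + (D (cc D f N) + ee D f N + cc D f N ^ 2) * cc D f N + gg D f N)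
  + x ^ 2 * (D (D (D (cc D f N))) + D (D (ee D f N)) + 2 * D (cc D f N) ^ 2
     + 2 * cc D f N * D (D (cc D f N))
     + 2 * (D (D (ee D f N)) + D (gg D f N) + D (cc D f N) * ee D f N + cc D f N * D (ee D f N))
     + (D (D (cc D f N)) + D (ee D f N) + 2 * cc D f N * D (cc D f N)) * cc D f N
     + (D (cc D f N) + ee D f N + cc D f N ^ 2) * D (cc D f N) + D (gg D f N))
  + (1 + b - 2 * x) * (D (cc D f N) + 2 * ee D f N + cc D f N ^ 2)
  + x * (1 + b - x) * (D (D (cc D f N)) + 2 * D (ee D f N) + 2 * cc D f N * D (cc D f N))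
  + 2 * ((N - 1) * (D (cc D f N) + ee D f N + cc D f N ^ 2) + (N - 2) * ee D f N)
  + 2 * x * ((N - 1) * (D (D (cc D f N)) + D (ee D f N) + 2 * cc D f N * D (cc D f N))
      + (N - 2) * D (ee D f N))
  + (-(N - 1) - N) * cc D f N
  + ((N - 1) * (b + N - 1 - x) - N * x) * D (cc D f N)
  - (a + N - 1) * (cc D f N + x * D (cc D f N)) := by
  have hd2 : D (2 : A) = 0 := by simpa using D.map_natCast 2
  simp only [R3, pow_two]
  simp only [map_add, map_sub, Derivation.leibniz, smul_eq_mul, hx, Derivation.map_natCast, hd2,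
    Derivation.map_one_eq_zero]
  ring

include hx in
/-- The third order equation for the logarithmic derivative. -/
lemma ode_abs (hL : ∀ j, x * D (D (f j)) + (b - x) * D (f j) = (a + j) * f j)
    (hR : ∀ j, f (j + 1) = x * D (f j) + (a + j) * f j)
    (N : ℕ) (hu : ∀ n < N, IsUnit (rr D f n n)) (u n p q : A)
    (hp : p = N) (hq : q = a + N - 1) (hn : n = b + N - 1)
    (hu' : u = p * (n - p) + x * cc D f N - p * x) :
    x ^ 2 * D (D (D u)) + x * D (D u) + 6 * x * (D u) ^ 2 - 4 * u * D u
     + (-x ^ 2 + 2 * (n + 2 * (p - q)) * x - (n - 2 * p) ^ 2) * D u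
     - (-x + (n + 2 * (p - q))) * u + p * (p - q) * (x + n - 2 * p) = 0 := by
  have hric : ∀ n < N, Ric D f x a b n = 0 :=
    fun n hn => ric_zero D f x hx a b hL n (fun k hk => hu k (by omega))
  have h1 := R1_zero D f x a b N hric
  have h4 := R4_zero D f x hx a b N hric
  have h3 := R3_zero D f x hx a b hL hR N hu
  have hD1 := D_R1 D f x hx a b N
  have hDD1 := DD_R1 D f x hx a b N
  have hD3 := D_R3 D f x hx a b N
  rw [h1, map_zero] at hD1
  rw [h1, map_zero, map_zero] at hDD1
  rw [h3, map_zero] at hD3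
  have hDp : D p = 0 := by rw [hp]; simp
  have hDn : D n = 0 := by rw [hn]; simp
  have e1 : D u = cc D f N + x * D (cc D f N) - p := by
    rw [hu']
    simp only [map_add, map_sub, Derivation.leibniz, smul_eq_mul, hx, hDp, hDn]
    ring
  have e2 : D (D u) = 2 * D (cc D f N) + x * D (D (cc D f N)) := by
    rw [e1]
    simp only [map_add, map_sub, Derivation.leibniz, smul_eq_mul, hx, hDp]
    ring
  have e3 : D (D (D u)) = 3 * D (D (cc D f N)) + x * D (D (D (cc D f N))) := by
    have hd2 : D (2 : A) = 0 := by simpa using D.map_natCast 2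
    rw [e2]
    simp only [map_add, Derivation.leibniz, smul_eq_mul, hx, hd2]
    ring
  rw [e3, e2, e1, hu', hp, hq, hn]
  simp only [R1, R3, R4] at h1 h3 h4
  linear_combination -6 * x ^ 2 * h4 - 2 * h3 - 4 * x * hD3 + (-x - 1 - b + N) * h1
    - (-x * (b - x) - 5 * x * N + 5 * x - 6 * x ^ 2 * cc D f N) * hD1 + 3 * x ^ 2 * hDD1

end Alg
end PainA

namespace PainA

variable {A : Type*} [CommRing A]

def Wr (D : Derivation ℤ A A) (f : ℕ → A) (N : ℕ) : Matrix (Fin N) (Fin N) A :=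
  Matrix.of fun i j => (⇑D)^[(i : ℕ)] (f j)

lemma exists_coeff (D : Derivation ℤ A A) (f : ℕ → A) (N : ℕ) :
    ∃ κ : ℕ → A, κ N = 1 ∧ (∀ i, N < i → κ i = 0) ∧
      ∀ m K, N < K → rr D f N m = ∑ i ∈ Finset.range K, κ i * (⇑D)^[i] (f m) := by
  induction N with
  | zero =>
    refine ⟨fun i => if i = 0 then 1 else 0, by simp, fun i hi => by simp [hi.ne'], ?_⟩
    intro m K hK
    simp [rr, hK]
  | succ N ih =>
    obtain ⟨κ, h1, h2, h3⟩ := ih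
    refine ⟨fun i => D (κ i) + (if i = 0 then 0 else κ (i-1)) - ss D f N * κ i, ?_, ?_, ?_⟩
    · simp [h1, h2 (N+1) (by omega)]
    · intro i hi
      have : i ≠ 0 := by omega
      simp [h2 i (by omega), h2 (i-1) (by omega), this]
    · intro m K hK
      obtain ⟨K, rfl⟩ : ∃ K', K = K' + 1 := ⟨K - 1, by omega⟩
      rw [rr_succ, h3 m (K + 1) (by omega), map_sum]
      have e1 : ∑ i ∈ Finset.range (K+1), D (κ i * (⇑D)^[i] (f m))
          = ∑ i ∈ Finset.range (K+1), D (κ i) * (⇑D)^[i] (f m)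
           + ∑ i ∈ Finset.range (K+1), κ i * (⇑D)^[i+1] (f m) := by
        rw [← Finset.sum_add_distrib]
        refine Finset.sum_congr rfl fun i _ => ?_
        rw [Derivation.leibniz, Function.iterate_succ_apply']
        simp only [smul_eq_mul]; ring
      have e2 : ∑ i ∈ Finset.range (K+1), κ i * (⇑D)^[i+1] (f m)
          = ∑ i ∈ Finset.range (K+1), (if i = 0 then 0 else κ (i-1)) * (⇑D)^[i] (f m) := by
        rw [Finset.sum_range_succ, h2 K (by omega), Finset.sum_range_succ']
        simp
      rw [e1, e2, Finset.mul_sum, ← Finset.sum_add_distrib, ← Finset.sum_sub_distrib]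
      refine Finset.sum_congr rfl fun i _ => ?_
      ring

lemma rr_lower (D : Derivation ℤ A A) (f : ℕ → A) (i j : ℕ) (hij : j < i)
    (hu : ∀ n < i, IsUnit (rr D f n n)) : rr D f i j = 0 := by
  induction i with
  | zero => omega
  | succ i ih =>
    rcases Nat.lt_succ_iff_lt_or_eq.1 hij with h | h
    · rw [rr_succ, ih h (fun n hn => hu n (by omega))]; simp
    · subst h; exact rr_diag_zero D f j (hu j (by omega))

lemma det_Wr (D : Derivation ℤ A A) (f : ℕ → A) (N : ℕ)
    (hu : ∀ n, n + 1 < N → IsUnit (rr D f n n)) :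
    (Wr D f N).det = ∏ i ∈ Finset.range N, rr D f i i := by
  choose κ h1 h2 h3 using exists_coeff D f
  let U : Matrix (Fin N) (Fin N) A := Matrix.of fun i j => κ i j
  have hU : U.det = 1 := by
    rw [Matrix.det_of_lowerTriangular U]
    · simp [U, h1]
    · intro i j hij
      exact h2 _ _ (by simpa using hij)
  have hM : U * Wr D f N = Matrix.of fun i j : Fin N => rr D f i j := by
    ext i j
    rw [Matrix.mul_apply]
    simp only [U, Wr, Matrix.of_apply]
    rw [h3 i j N i.2, Finset.sum_range]
  have : (U * Wr D f N).det = ∏ i ∈ Finset.range N, rr D f i i := by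
    rw [hM, Matrix.det_of_upperTriangular]
    · simp [Finset.prod_range]
    · intro i j hij
      have : (j : ℕ) < i := by simpa using hij
      exact rr_lower D f i j this (fun n hn => hu n (by omega))
  rw [← this, Matrix.det_mul, hU, one_mul]

lemma units_of_Wr (D : Derivation ℤ A A) (f : ℕ → A) (N : ℕ)
    (hW : ∀ n ≤ N, IsUnit (Wr D f n).det) : ∀ n < N, IsUnit (rr D f n n) := by
  intro n
  induction n using Nat.strong_induction_on with
  | _ n ih =>
    intro hn
    have := hW (n+1) (by omega)
    rw [det_Wr D f (n+1) (fun k hk => ih k (by omega) (by omega)), Finset.prod_range_succ] at this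
    exact isUnit_of_mul_isUnit_right this

lemma D_Wr (D : Derivation ℤ A A) (f : ℕ → A) (N : ℕ)
    (hW : ∀ n ≤ N, IsUnit (Wr D f n).det) :
    D (Wr D f N).det = cc D f N * (Wr D f N).det := by
  have hu := units_of_Wr D f N hW
  rw [det_Wr D f N (fun n hn => hu n (by omega))]
  clear hW
  induction N with
  | zero => simp [cc]
  | succ N ih =>
    rw [Finset.prod_range_succ, Derivation.leibniz, ih (fun n hn => hu n (by omega)),
      D_rr D f N (hu N (by omega)), cc_succ]
    simp only [smul_eq_mul]; ring

/-- abstract form of the main algebraic result -/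
theorem ode_main (D : Derivation ℤ A A) (f : ℕ → A) (x : A) (hx : D x = 1) (a b : ℕ)
    (hL : ∀ j, x * D (D (f j)) + (b - x) * D (f j) = (a + j) * f j)
    (hR : ∀ j, f (j + 1) = x * D (f j) + (a + j) * f j)
    (N : ℕ) (hW : ∀ n ≤ N, IsUnit (Wr D f n).det) (u n p q : A)
    (hp : p = N) (hq : q = a + N - 1) (hn : n = b + N - 1)
    (hu' : u * (Wr D f N).det = (p * (n - p) - p * x) * (Wr D f N).det + x * D (Wr D f N).det) :
    x ^ 2 * D (D (D u)) + x * D (D u) + 6 * x * (D u) ^ 2 - 4 * u * D u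
     + (-x ^ 2 + 2 * (n + 2 * (p - q)) * x - (n - 2 * p) ^ 2) * D u
     - (-x + (n + 2 * (p - q))) * u + p * (p - q) * (x + n - 2 * p) = 0 := by
  refine ode_abs D f x hx a b hL hR N (units_of_Wr D f N hW) u n p q hp hq hn ?_
  rw [D_Wr D f N hW] at hu'
  refine (hW N le_rfl).mul_right_cancel ?_
  rw [hu']; ring

end PainA

namespace PainA

open scoped ContDiff in
/-- smooth functions of `y = log x` -/
def SmA : Subring (ℝ → ℝ) where
  carrier := {f | ContDiff ℝ ∞ f}
  mul_mem' := by
    intro f g h1 h2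
    exact ContDiff.mul (show ContDiff ℝ ∞ f from h1) (show ContDiff ℝ ∞ g from h2)
  one_mem' := by
    show ContDiff ℝ ∞ (fun _ => (1:ℝ))
    exact contDiff_const
  add_mem' := by
    intro f g h1 h2
    exact ContDiff.add (show ContDiff ℝ ∞ f from h1) (show ContDiff ℝ ∞ g from h2)
  zero_mem' := by
    show ContDiff ℝ ∞ (fun _ => (0:ℝ))
    exact contDiff_const
  neg_mem' := by
    intro f h1
    exact ContDiff.neg (show ContDiff ℝ ∞ f from h1)

open scoped ContDiff in
lemma SmA_mem (f : ℝ → ℝ) : f ∈ SmA ↔ ContDiff ℝ ∞ f := Iff.rfl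

open scoped ContDiff in
lemma SmA_deriv {f : ℝ → ℝ} (hf : f ∈ SmA) : deriv f ∈ SmA := by
  rw [SmA_mem] at *
  exact (contDiff_infty_iff_deriv.1 hf).2

open scoped ContDiff in
lemma SmA_diff {f : ℝ → ℝ} (hf : f ∈ SmA) : Differentiable ℝ f := by
  rw [SmA_mem] at *
  exact (contDiff_infty_iff_deriv.1 hf).1

def expNeg : SmA := ⟨fun y => Real.exp (-y), by rw [SmA_mem]; fun_prop⟩

def SmD : Derivation ℤ SmA SmA :=
  Derivation.mk' (AddMonoidHom.toIntLinearMap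
    { toFun := fun f => expNeg * ⟨deriv f.1, SmA_deriv f.2⟩
      map_zero' := by
        ext y; simp
      map_add' := by
        intro f g
        ext y
        have := deriv_add (SmA_diff f.2 y) (SmA_diff g.2 y)
        simp [this]; ring }) (by
    intro f g
    ext y
    have := deriv_mul (SmA_diff f.2 y) (SmA_diff g.2 y)
    simp [this]; ring)

lemma SmD_apply (f : SmA) (y : ℝ) : (SmD f).1 y = Real.exp (-y) * deriv f.1 y := rfl

def SmX : SmA := ⟨Real.exp, by rw [SmA_mem]; exact Real.contDiff_exp⟩

lemma SmD_X : SmD SmX = 1 := by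
  ext y
  have := SmD_apply SmX y
  rw [this]
  simp [SmX, ← Real.exp_add]

lemma deriv_of_log (v : ℝ → ℝ) (h : SmA) (hv : ∀ x, 0 < x → v x = h.1 (Real.log x)) :
    ∀ x, 0 < x → deriv v x = (SmD h).1 (Real.log x) := by
  intro x hx
  have e : v =ᶠ[𝓝 x] fun x => h.1 (Real.log x) := by
    filter_upwards [lt_mem_nhds hx] with z hz using hv z hz
  rw [e.deriv_eq, SmD_apply]
  have := ((SmA_diff h.2 (Real.log x)).hasDerivAt.comp x (Real.hasDerivAt_log hx.ne')).deriv
  simp only [Function.comp_def] at this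
  rw [this, Real.exp_neg, Real.exp_log hx]; ring

open scoped ContDiff in
def lift (F : ℝ → ℝ) (hF : ContDiff ℝ ∞ F) : SmA :=
  ⟨fun y => F (Real.exp y), by rw [SmA_mem]; exact hF.comp Real.contDiff_exp⟩

open scoped ContDiff in
lemma SmD_lift (F : ℝ → ℝ) (hF : ContDiff ℝ ∞ F) :
    SmD (lift F hF) = lift (deriv F) (contDiff_infty_iff_deriv.1 hF).2 := by
  ext y
  have := SmD_apply (lift F hF) y
  rw [this]
  have h := (((contDiff_infty_iff_deriv.1 hF).1 (Real.exp y)).hasDerivAt.comp y (Real.hasDerivAt_exp y)).deriv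
  simp only [Function.comp_def] at h
  simp only [lift]
  rw [h, Real.exp_neg]
  field_simp

open scoped ContDiff in
lemma SmD_iter_lift (F : ℝ → ℝ) (hF : ContDiff ℝ ∞ F) (i : ℕ) (y : ℝ) :
    ((⇑SmD)^[i] (lift F hF)).1 y = iteratedDeriv i F (Real.exp y) := by
  induction i generalizing F with
  | zero => simp [lift]
  | succ i ih =>
    rw [Function.iterate_succ_apply, SmD_lift, ih, iteratedDeriv_succ']

lemma SmA_isUnit (f : SmA) (h : ∀ y, f.1 y ≠ 0) : IsUnit f := by
  refine IsUnit.of_mul_eq_one ⟨fun y => (f.1 y)⁻¹, ?_⟩ ?_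
  · have := f.2
    rw [SmA_mem] at *
    exact this.inv h
  · ext y
    simp [h y]

open scoped ContDiff in
theorem ode_real (F : ℕ → ℝ → ℝ) (hF : ∀ j, ContDiff ℝ ∞ (F j)) (a b : ℕ)
    (hL : ∀ j x, 0 < x → x * deriv (deriv (F j)) x + (b - x) * deriv (F j) x = (a + j) * F j x)
    (hR : ∀ j x, 0 < x → F (j + 1) x = x * deriv (F j) x + (a + j) * F j x)
    (N : ℕ) (W : ℕ → ℝ → ℝ)
    (hWdef : ∀ n x, W n x = (Matrix.of fun i j : Fin n => iteratedDeriv i (F j) x).det)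
    (hW : ∀ n, ∀ x, 0 < x → W n x ≠ 0) (hWs : ContDiff ℝ ∞ (W N)) (v : ℝ → ℝ) (n p q : ℝ)
    (hp : p = N) (hq : q = a + N - 1) (hn : n = b + N - 1)
    (hv : ∀ x, 0 < x → v x = (p * (n - p) - p * x) + x * deriv (W N) x / W N x) (x : ℝ) (hx : 0 < x) :
    x ^ 2 * deriv (deriv (deriv v)) x + x * deriv (deriv v) x + 6 * x * (deriv v x) ^ 2
     - 4 * v x * deriv v x
     + (-x ^ 2 + 2 * (n + 2 * (p - q)) * x - (n - 2 * p) ^ 2) * deriv v x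
     - (-x + (n + 2 * (p - q))) * v x + p * (p - q) * (x + n - 2 * p) = 0 := by
  let f : ℕ → SmA := fun j => lift (F j) (hF j)
  have hdet : ∀ n y, ((Wr SmD f n).det).1 y = W n (Real.exp y) := by
    intro n y
    rw [hWdef]
    have : ((Wr SmD f n).det).1 y = ((Pi.evalRingHom (fun _ : ℝ => ℝ) y).comp SmA.subtype) (Wr SmD f n).det := rfl
    rw [this, RingHom.map_det]
    congr 1
    ext i j
    simp only [RingHom.mapMatrix_apply, Matrix.map_apply, Wr, Matrix.of_apply]
    exact SmD_iter_lift (F j) (hF j) i y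
  have hdet' : (Wr SmD f N).det = lift (W N) hWs := by
    ext y; exact hdet N y
  have hunit : ∀ n ≤ N, IsUnit (Wr SmD f n).det := by
    intro n _
    apply SmA_isUnit
    intro y
    rw [hdet]
    exact hW n _ (Real.exp_pos y)
  have hWN := hunit N le_rfl
  let cst : ℝ → SmA := fun r => ⟨fun _ => r, by rw [SmA_mem]; exact contDiff_const⟩
  let u : SmA := cst p * (cst n - cst p) - cst p * SmX
    + SmX * SmD (Wr SmD f N).det * Ring.inverse (Wr SmD f N).det
  have hmul : u * (Wr SmD f N).det = (cst p * (cst n - cst p) - cst p * SmX) * (Wr SmD f N).det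
     + SmX * SmD (Wr SmD f N).det := by
    simp only [u]
    rw [add_mul, mul_assoc _ (Ring.inverse _) _, Ring.inverse_mul_cancel _ hWN, mul_one]
  have hcast : ∀ k : ℕ, ((k : SmA)).1 = fun _ => (k : ℝ) := by
    intro k; ext y; simp
  have main := ode_main SmD f SmX SmD_X a b ?_ ?_ N hunit u (cst n) (cst p) (cst q) ?_ ?_ ?_ hmul
  · have hv0 : ∀ x, 0 < x → v x = u.1 (Real.log x) := by
      intro x hx
      rw [hv x hx]
      have h := congrFun (congrArg Subtype.val hmul) (Real.log x)
      rw [hdet'] at h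
      rw [SmD_lift] at h
      have hne := hW N x hx
      simp only [lift, cst, SmX, Subring.coe_mul, Subring.coe_add, AddSubgroupClass.coe_sub, Pi.mul_apply, Pi.add_apply,
        Pi.sub_apply, Real.exp_log hx] at h
      field_simp
      linarith
    have hv1 := deriv_of_log v u hv0
    have hv2 := deriv_of_log _ _ hv1
    have hv3 := deriv_of_log _ _ hv2
    have h := congrFun (congrArg Subtype.val main) (Real.log x)
    rw [hv0 x hx, hv1 x hx, hv2 x hx, hv3 x hx]
    have hX : SmX.1 (Real.log x) = x := Real.exp_log hx
    have h2 : ((2 : SmA)).1 (Real.log x) = 2 := rfl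
    have h4 : ((4 : SmA)).1 (Real.log x) = 4 := rfl
    have h6 : ((6 : SmA)).1 (Real.log x) = 6 := rfl
    simp only [cst, Subring.coe_mul, Subring.coe_add, AddSubgroupClass.coe_sub, Subring.coe_neg, Subring.coe_pow, Pi.mul_apply, Pi.add_apply,
        Pi.sub_apply, Pi.neg_apply, Pi.pow_apply, hX, h2, h4, h6] at h
    exact h
  · intro j
    simp only [f, SmD_lift]
    ext y
    have := hL j _ (Real.exp_pos y)
    simpa [lift, SmX] using this
  · intro j
    simp only [f, SmD_lift]
    ext y
    have := hR j _ (Real.exp_pos y)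
    simpa [lift, SmX] using this
  · ext y; simp [cst, hp]
  · ext y; simp [cst, hq]
  · ext y; simp [cst, hn]

end PainA

namespace PainA

/-- entire coefficient sequences -/
def Ent (c : ℕ → ℝ) : Prop := ∀ r : ℝ, 0 ≤ r → Summable fun k => |c k| * r ^ k

def Sr (c : ℕ → ℝ) (x : ℝ) : ℝ := ∑' k, c k * x ^ k

lemma Ent.summable {c : ℕ → ℝ} (h : Ent c) (x : ℝ) : Summable fun k => c k * x ^ k := by
  refine Summable.of_norm ?_
  have := h |x| (abs_nonneg x)
  refine this.congr fun k => ?_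
  rw [norm_mul, norm_pow, Real.norm_eq_abs, Real.norm_eq_abs]

lemma Ent.hasSum {c : ℕ → ℝ} (h : Ent c) (x : ℝ) : HasSum (fun k => c k * x ^ k) (Sr c x) :=
  (h.summable x).hasSum

lemma Ent.mono {c d : ℕ → ℝ} (h : Ent c) (hd : ∀ k, |d k| ≤ |c k|) : Ent d := by
  intro r hr
  refine Summable.of_nonneg_of_le (fun k => by positivity) (fun k => ?_) (h r hr)
  exact mul_le_mul_of_nonneg_right (hd k) (by positivity)

lemma Ent.mul_nat {c : ℕ → ℝ} (h : Ent c) : Ent (fun k => k * c k) := by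
  intro r hr
  refine Summable.of_nonneg_of_le (fun k => by positivity) (fun k => ?_) (h (2 * r) (by positivity))
  rw [abs_mul, mul_pow, Nat.abs_cast]
  have : (k : ℝ) ≤ 2 ^ k := by exact_mod_cast Nat.lt_two_pow_self.le
  have h2 : 0 ≤ |c k| * r ^ k := by positivity
  nlinarith

lemma Ent.add {c d : ℕ → ℝ} (h : Ent c) (h' : Ent d) : Ent (fun k => c k + d k) := by
  intro r hr
  refine Summable.of_nonneg_of_le (fun k => by positivity) (fun k => ?_) ((h r hr).add (h' r hr))
  rw [← add_mul]
  exact mul_le_mul_of_nonneg_right (abs_add_le _ _) (by positivity)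

lemma Ent.smul {c : ℕ → ℝ} (h : Ent c) (a : ℝ) : Ent (fun k => a * c k) := by
  intro r hr
  refine ((h r hr).mul_left |a|).congr fun k => ?_
  rw [abs_mul]; ring

lemma Ent.shift {c : ℕ → ℝ} (h : Ent c) : Ent (fun k => c (k + 1)) := by
  intro r hr
  have h1 := (summable_nat_add_iff 1).2 (h (r + 1) (by positivity))
  refine Summable.of_nonneg_of_le (fun k => by positivity) (fun k => ?_) h1
  have : r ^ k ≤ (r + 1) ^ (k + 1) := by
    calc r ^ k ≤ (r + 1) ^ k := by gcongr; linarith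
      _ ≤ (r+1) ^ (k+1) := by
        apply pow_le_pow_right₀ <;> linarith
  gcongr

/-- coefficients of derivative -/
def dc (c : ℕ → ℝ) : ℕ → ℝ := fun k => (k + 1 : ℝ) * c (k + 1)

lemma Ent.dc {c : ℕ → ℝ} (h : Ent c) : Ent (dc c) := by
  have := h.mul_nat.shift
  unfold PainA.dc
  simpa using this

lemma Ent.hasDerivAt {c : ℕ → ℝ} (h : Ent c) (x : ℝ) : HasDerivAt (Sr c) (Sr (PainA.dc c) x) x := by
  have key := hasDerivAt_tsum_of_isPreconnected (𝕜 := ℝ) (F := ℝ) (t := Metric.ball (0:ℝ) (|x| + 1))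
    (g := fun k y => c k * y ^ k) (g' := fun k y => c k * (k * y ^ (k - 1)))
    (u := fun k => |c k * (k * (|x| + 1) ^ (k - 1))|) (y₀ := 0) (y := x) ?_ Metric.isOpen_ball
    (Metric.isConnected_ball (by positivity)).isPreconnected ?_ ?_ (by simp; positivity) ?_ (by simp)
  · have e : Sr (PainA.dc c) x = ∑' k, c k * (k * x ^ (k - 1)) := by
      unfold Sr PainA.dc
      have hs : Summable fun k => c k * (k * x ^ (k - 1)) := by
        rw [← summable_nat_add_iff 1]
        refine (h.dc.summable x).congr fun k => ?_
        simp [PainA.dc]; ring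
      rw [hs.tsum_eq_zero_add]
      simp
      refine tsum_congr fun k => ?_
      ring
    rw [e]
    exact key
  · rw [← summable_nat_add_iff 1]
    refine (h.dc (|x|+1) (by positivity)).congr fun k => ?_
    simp only [PainA.dc, Nat.add_sub_cancel, abs_mul]
    rw [abs_of_nonneg (show (0:ℝ) ≤ (|x| + 1) ^ k by positivity)]
    push_cast
    ring
  · intro k y _
    exact (hasDerivAt_pow k y).const_mul _
  · intro k y hy
    rw [Real.norm_eq_abs]
    simp only [Metric.mem_ball, dist_zero_right, Real.norm_eq_abs] at hy
    simp only [abs_mul, abs_pow]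
    rw [abs_of_nonneg (show (0:ℝ) ≤ |x| + 1 by positivity)]
    refine mul_le_mul_of_nonneg_left (mul_le_mul_of_nonneg_left ?_ (abs_nonneg _)) (abs_nonneg _)
    exact pow_le_pow_left₀ (abs_nonneg _) hy.le _
  · exact h.summable 0

lemma Ent.deriv {c : ℕ → ℝ} (h : Ent c) : deriv (Sr c) = Sr (PainA.dc c) := by
  ext x; exact (h.hasDerivAt x).deriv

lemma Ent.analytic {c : ℕ → ℝ} (h : Ent c) (x : ℝ) : AnalyticAt ℝ (Sr c) x := by
  let P : FormalMultilinearSeries ℝ ℝ ℝ := FormalMultilinearSeries.ofScalars ℝ c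
  have hr : P.radius = ⊤ := by
    apply FormalMultilinearSeries.radius_eq_top_of_summable_norm
    intro r
    refine (h r r.2).congr fun k => ?_
    simp [P]
  have h1 : HasFPowerSeriesOnBall P.sum P 0 P.radius :=
    P.hasFPowerSeriesOnBall (by rw [hr]; exact ENNReal.coe_lt_top)
  have h2 : P.sum = Sr c := by
    ext y
    simp only [FormalMultilinearSeries.sum, P, Sr]
    refine tsum_congr fun k => ?_
    simp [mul_comm]
  rw [h2, hr] at h1
  exact h1.analyticAt_of_mem (by simp)

open scoped ContDiff in
lemma Ent.contDiff {c : ℕ → ℝ} (h : Ent c) : ContDiff ℝ ∞ (Sr c) :=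
  contDiff_iff_contDiffAt.2 fun x => (h.analytic x).contDiffAt

lemma Ent.iteratedDeriv {c : ℕ → ℝ} (h : Ent c) (i : ℕ) :
    Ent (fun k => ((k + i).descFactorial i : ℝ) * c (k + i)) ∧
    iteratedDeriv i (Sr c) = Sr (fun k => ((k + i).descFactorial i : ℝ) * c (k + i)) := by
  induction i with
  | zero => simpa using h
  | succ i ih =>
    have e : (fun k => ((k + (i + 1)).descFactorial (i + 1) : ℝ) * c (k + (i + 1)))
       = PainA.dc (fun k => ((k + i).descFactorial i : ℝ) * c (k + i)) := by
      ext k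
      simp only [PainA.dc]
      rw [Nat.descFactorial_succ]
      rw [show k + (i + 1) - i = k + 1 by omega, show k + (i+1) = k + 1 + i by omega]
      push_cast; ring
    rw [e]
    refine ⟨ih.1.dc, ?_⟩
    rw [iteratedDeriv_succ, ih.2, ih.1.deriv]

lemma Ent.iteratedDeriv_zero {c : ℕ → ℝ} (h : Ent c) (i : ℕ) :
    _root_.iteratedDeriv i (Sr c) 0 = (i.factorial : ℝ) * c i := by
  rw [(h.iteratedDeriv i).2]
  unfold Sr
  rw [tsum_eq_single 0]
  · simp [Nat.descFactorial_self]
  · intro k hk; simp [hk]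

lemma Ent.iteratedDeriv_hasSum {c : ℕ → ℝ} (h : Ent c) (i : ℕ) (x : ℝ) :
    HasSum (fun k => (k.descFactorial i : ℝ) * (c k * x ^ k)) (x ^ i * _root_.iteratedDeriv i (Sr c) x) := by
  have h0 := ((h.iteratedDeriv i).1.hasSum x).mul_left (x ^ i)
  rw [← (h.iteratedDeriv i).2] at h0
  have h1 : HasSum (fun k => ((k + i).descFactorial i : ℝ) * (c (k + i) * x ^ (k + i)))
     (x ^ i * _root_.iteratedDeriv i (Sr c) x) := by
    have e : (fun k => ((k + i).descFactorial i : ℝ) * (c (k + i) * x ^ (k + i))) =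
      fun k => x ^ i * (((k + i).descFactorial i : ℝ) * c (k + i) * x ^ k) := by
      funext k; ring
    rw [e]; exact h0
  rw [hasSum_nat_add_iff (f := fun k => (k.descFactorial i : ℝ) * (c k * x ^ k))] at h1
  rw [Finset.sum_eq_zero, add_zero] at h1
  · exact h1
  · intro k hk
    rw [Nat.descFactorial_of_lt (Finset.mem_range.1 hk)]; simp

/-- weights -/
def wt (α β k : ℕ) : ℝ := ((k + α).factorial : ℝ) / (((k + β).factorial : ℝ) * (k.factorial : ℝ))

lemma wt_pos (α β k : ℕ) : 0 < wt α β k := by unfold wt; positivity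

lemma wt_ent {α β : ℕ} (h : α ≤ β) : Ent (wt α β) := by
  have : Ent (fun k => (1 : ℝ) / k.factorial) := by
    intro r hr
    refine (Real.summable_pow_div_factorial r).congr fun k => ?_
    rw [abs_of_nonneg (by positivity)]; ring
  refine this.mono fun k => ?_
  rw [abs_of_nonneg (wt_pos _ _ _).le, abs_of_nonneg (by positivity)]
  unfold wt
  have h1 : ((k + α).factorial : ℝ) ≤ ((k + β).factorial : ℝ) := by
    exact_mod_cast Nat.factorial_le (by omega)
  rw [div_le_div_iff₀ (by positivity) (by positivity)]
  have : (0:ℝ) < k.factorial := by positivity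
  nlinarith

/-- coefficient of `F_j` -/
def cf (α β j k : ℕ) : ℝ := ((k + α + 1).ascFactorial j : ℝ) * wt α β k

lemma cf_succ (α β j k : ℕ) : cf α β (j + 1) k = k * cf α β j k + (α + 1 + j) * cf α β j k := by
  unfold cf
  rw [Nat.ascFactorial_succ]; push_cast; ring

lemma cf_ent {α β : ℕ} (h : α ≤ β) (j : ℕ) : Ent (cf α β j) := by
  induction j with
  | zero => 
    have := wt_ent h
    unfold cf; simpa using this
  | succ j ih =>
    have : cf α β (j + 1) = fun k => k * cf α β j k + (α + 1 + j) * cf α β j k := by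
      ext k; exact cf_succ _ _ _ _
    rw [this]
    exact ih.mul_nat.add (ih.smul _)

def Ff (α β j : ℕ) : ℝ → ℝ := Sr (cf α β j)

lemma Ent.hasSum_xderiv {c : ℕ → ℝ} (h : Ent c) (x : ℝ) :
    HasSum (fun k => k * c k * x ^ k) (x * Sr (PainA.dc c) x) := by
  have := h.iteratedDeriv_hasSum 1 x
  rw [iteratedDeriv_one, h.deriv] at this
  simpa [mul_assoc] using this

lemma Ff_R {α β : ℕ} (h : α ≤ β) (j : ℕ) (x : ℝ) :
    Ff α β (j + 1) x = x * deriv (Ff α β j) x + ((α + 1 : ℕ) + j) * Ff α β j x := by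
  have e := cf_ent h j
  unfold Ff
  rw [e.deriv]
  refine HasSum.unique ((cf_ent h (j+1)).hasSum x) ?_
  have := (e.hasSum_xderiv x).add ((e.hasSum x).mul_left (((α + 1 : ℕ) : ℝ) + j))
  convert this using 2 with k
  rw [cf_succ]; push_cast; ring

lemma cf_rec (α β j k : ℕ) : (k + 1 : ℝ) * (k + β + 1) * cf α β j (k + 1) = (k + α + 1 + j) * cf α β j k := by
  have hw : (k + 1 : ℝ) * (k + β + 1) * wt α β (k + 1) = (k + α + 1) * wt α β k := by
    unfold wt
    rw [show k + 1 + α = (k + α) + 1 by omega, show k + 1 + β = (k + β) + 1 by omega,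
      Nat.factorial_succ, Nat.factorial_succ, Nat.factorial_succ k]
    push_cast
    have h1 : ((k + β).factorial : ℝ) ≠ 0 := by positivity
    have h2 : (k.factorial : ℝ) ≠ 0 := by positivity
    have h3 : (k + 1 : ℝ) ≠ 0 := by positivity
    have h4 : (k + β + 1 : ℝ) ≠ 0 := by positivity
    field_simp
  have ha : (k + α + 1 : ℝ) * ((k + 1 + α + 1).ascFactorial j : ℝ) = (k + α + 1 + j) * ((k + α + 1).ascFactorial j : ℝ) := by
    have := Nat.succ_ascFactorial (k + α + 1) j
    rw [show k + 1 + α + 1 = k + α + 1 + 1 by omega]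
    exact_mod_cast this
  unfold cf
  linear_combination ((k + 1 + α + 1).ascFactorial j : ℝ) * hw + wt α β k * ha

lemma Ff_L {α β : ℕ} (h : α ≤ β) (j : ℕ) (x : ℝ) :
    x * deriv (deriv (Ff α β j)) x + ((β + 1 : ℕ) - x) * deriv (Ff α β j) x = ((α + 1 : ℕ) + j) * Ff α β j x := by
  have e := cf_ent h j
  unfold Ff
  rw [e.deriv, e.dc.deriv]
  have h1 := (e.dc.hasSum_xderiv x).add ((e.dc.hasSum x).mul_left ((β + 1 : ℕ) : ℝ))
  have h2 := (e.hasSum_xderiv x).add ((e.hasSum x).mul_left (((α + 1 : ℕ) : ℝ) + j))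
  have := h1.unique (by
    convert h2 using 2 with k
    have := cf_rec α β j k
    simp only [PainA.dc]
    push_cast
    linear_combination x ^ k * this)
  linear_combination this

end PainA

namespace PainA

lemma det_sum_rows (N : ℕ) (t : Fin N → Finset ℕ) (g : Fin N → ℕ → Fin N → ℝ) :
    (Matrix.of fun i j => ∑ k ∈ t i, g i k j).det =
      ∑ r ∈ Fintype.piFinset t, (Matrix.of fun i j => g i (r i) j).det := by
  have := (Matrix.detRowAlternating (n := Fin N) (R := ℝ)).toMultilinearMap.map_sum_finset
    (fun i k => g i k) t

  rw [show (Matrix.of fun i j => ∑ k ∈ t i, g i k j) = (fun i => ∑ k ∈ t i, g i k : Matrix (Fin N) (Fin N) ℝ) by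
    ext i j; simp [Finset.sum_apply]]
  exact this

lemma andreief_fin (N : ℕ) (t : Finset ℕ) (A : Fin N → ℕ → ℝ) (B : ℕ → Fin N → ℝ) :
    (N.factorial : ℝ) * (Matrix.of fun i j => ∑ k ∈ t, A i k * B k j).det =
      ∑ r ∈ Fintype.piFinset (fun _ : Fin N => t),
        (Matrix.of fun i l => A i (r l)).det * (Matrix.of fun l j => B (r l) j).det := by
  rw [det_sum_rows N (fun _ => t) (fun i k j => A i k * B k j)]
  have h1 : ∀ r : Fin N → ℕ, (Matrix.of fun i j => A i (r i) * B (r i) j).det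
     = (∏ i, A i (r i)) * (Matrix.of fun l j => B (r l) j).det := by
    intro r
    exact Matrix.det_mul_column (fun i => A i (r i)) (Matrix.of fun l j => B (r l) j)
  simp only [h1]
  have h2 : ∀ σ : Equiv.Perm (Fin N), ∑ r ∈ Fintype.piFinset (fun _ : Fin N => t), (∏ i, A i (r i)) * (Matrix.of fun l j => B (r l) j).det
     = ∑ r ∈ Fintype.piFinset (fun _ : Fin N => t), ((Equiv.Perm.sign σ : ℤ) : ℝ) * (∏ i, A i (r (σ i))) * (Matrix.of fun l j => B (r l) j).det := by
    intro σ
    symm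
    refine Finset.sum_bij' (fun r _ => r ∘ σ) (fun r _ => r ∘ σ.symm) ?_ ?_ ?_ ?_ ?_
    · intro r hr; simp only [Fintype.mem_piFinset] at *; intro a; exact hr _
    · intro r hr; simp only [Fintype.mem_piFinset] at *; intro a; exact hr _
    · intro r _; ext i; simp
    · intro r _; ext i; simp
    · intro r _
      have := Matrix.det_permute σ (Matrix.of fun l j => B (r l) j)
      have e : (Matrix.of fun l j => B (r l) j).submatrix σ id = (Matrix.of fun l j => B ((r ∘ σ) l) j) := rfl
      rw [← e, this]
      simp only [Function.comp]
      ring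
  have h3 : (N.factorial : ℝ) = ∑ σ : Equiv.Perm (Fin N), (1 : ℝ) := by
    simp [Fintype.card_perm]
  rw [h3, Finset.sum_mul]
  rw [Finset.sum_congr rfl (fun σ _ => by rw [one_mul, h2 σ])]
  rw [Finset.sum_comm]
  refine Finset.sum_congr rfl fun r _ => ?_
  rw [← Finset.sum_mul]
  congr 1
  rw [← Matrix.det_transpose, Matrix.det_apply']
  simp

lemma andreief_hasSum (N : ℕ) (A : Fin N → ℕ → ℝ) (B : ℕ → Fin N → ℝ) (M : Fin N → Fin N → ℝ)
    (h : ∀ i j, HasSum (fun k => A i k * B k j) (M i j))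
    (hnn : ∀ r : Fin N → ℕ, 0 ≤ (Matrix.of fun i l => A i (r l)).det * (Matrix.of fun l j => B (r l) j).det) :
    HasSum (fun r : Fin N → ℕ => (Matrix.of fun i l => A i (r l)).det * (Matrix.of fun l j => B (r l) j).det)
      ((N.factorial : ℝ) * (Matrix.of M).det) := by
  set T : (Fin N → ℕ) → ℝ := fun r => (Matrix.of fun i l => A i (r l)).det * (Matrix.of fun l j => B (r l) j).det with hT
  let P : ℕ → Finset (Fin N → ℕ) := fun K => Fintype.piFinset (fun _ : Fin N => Finset.range K)
  have hmono : Monotone P := by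
    intro K K' hK
    exact Fintype.piFinset_subset _ _ fun _ => Finset.range_mono hK
  have hP : Tendsto P atTop atTop := by
    refine tendsto_atTop_finset_of_monotone hmono fun r => ?_
    refine ⟨(Finset.univ.sup r) + 1, ?_⟩
    simp only [P, Fintype.mem_piFinset, Finset.mem_range]
    intro a
    exact Nat.lt_succ_of_le (Finset.le_sup (f := r) (Finset.mem_univ a))
  have hlim : Tendsto (fun K => ∑ r ∈ P K, T r) atTop (𝓝 ((N.factorial : ℝ) * (Matrix.of M).det)) := by
    have e : (fun K => ∑ r ∈ P K, T r) = fun K => (N.factorial : ℝ) * (Matrix.of fun i j => ∑ k ∈ Finset.range K, A i k * B k j).det := by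
      funext K
      exact (andreief_fin N (Finset.range K) A B).symm
    rw [e]
    refine Tendsto.const_mul _ ?_
    have hc : Continuous (fun M : Matrix (Fin N) (Fin N) ℝ => M.det) := Continuous.matrix_det continuous_id
    refine (hc.tendsto (Matrix.of M)).comp ?_
    refine tendsto_pi_nhds.2 fun i => tendsto_pi_nhds.2 fun j => ?_
    exact (h i j).tendsto_sum_nat
  have hm2 : Monotone (fun K => ∑ r ∈ P K, T r) := by
    intro K K' hK
    exact Finset.sum_le_sum_of_subset_of_nonneg (hmono hK) (fun r _ _ => hnn r)
  have hs : Summable T := by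
    refine summable_of_sum_le hnn (c := (N.factorial : ℝ) * (Matrix.of M).det) fun u => ?_
    obtain ⟨K, hK⟩ := (hP.eventually (eventually_ge_atTop u)).exists
    exact (Finset.sum_le_sum_of_subset_of_nonneg hK (fun r _ _ => hnn r)).trans (hm2.ge_of_tendsto hlim K)
  have := (hs.hasSum.comp hP)
  have e2 := tendsto_nhds_unique this hlim
  rw [← e2]
  exact hs.hasSum

lemma vdm_desc {N : ℕ} (r : Fin N → ℕ) :
    (Matrix.of fun l j : Fin N => ((r l).descFactorial j : ℝ)).det = (Matrix.vandermonde fun l => (r l : ℝ)).det := by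
  rw [Matrix.det_eval_matrixOfPolynomials_eq_det_vandermonde (fun l => (r l : ℝ)) (fun j => descPochhammer ℝ j)
    (fun i => descPochhammer_natDegree ℝ i) (fun i => monic_descPochhammer ℝ i)]
  congr 1
  ext l j
  simp [descPochhammer_eval_eq_descFactorial]

lemma vdm_asc {N : ℕ} (α : ℕ) (r : Fin N → ℕ) :
    (Matrix.of fun l j : Fin N => ((r l + α + 1).ascFactorial j : ℝ)).det = (Matrix.vandermonde fun l => (r l : ℝ)).det := by
  rw [← Matrix.det_vandermonde_add _ ((α : ℝ) + 1)]
  rw [Matrix.det_eval_matrixOfPolynomials_eq_det_vandermonde _ (fun j => ascPochhammer ℝ j)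
    (fun i => ascPochhammer_natDegree ℝ i) (fun i => monic_ascPochhammer ℝ i)]
  congr 1
  ext l j
  simp only [Matrix.of_apply]
  rw [show ((r l : ℝ) + (α + 1)) = ((r l + α + 1 : ℕ) : ℝ) by push_cast; ring,
    ← ascPochhammer_eval_cast, ascPochhammer_nat_eq_ascFactorial]

/-- Wronskian -/
def Wf (α β N : ℕ) (x : ℝ) : ℝ := (Matrix.of fun i j : Fin N => iteratedDeriv i (Ff α β j) x).det

/-- summand -/
def tm (α β N : ℕ) (x : ℝ) (r : Fin N → ℕ) : ℝ :=
  ((Matrix.vandermonde fun l => (r l : ℝ)).det) ^ 2 * ∏ l, (wt α β (r l) * x ^ (r l))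

lemma Wf_hasSum {α β : ℕ} (h : α ≤ β) (N : ℕ) (x : ℝ) (hx : 0 ≤ x) :
    HasSum (tm α β N x) ((N.factorial : ℝ) * ((∏ i : Fin N, x ^ (i : ℕ)) * Wf α β N x)) := by
  have h0 := andreief_hasSum N (fun i k => (k.descFactorial i : ℝ)) (fun k j => cf α β j k * x ^ k)
    (fun i j => x ^ (i : ℕ) * iteratedDeriv i (Ff α β j) x)
    (fun i j => (cf_ent h j).iteratedDeriv_hasSum i x)
  have hA : ∀ r : Fin N → ℕ, (Matrix.of fun (i : Fin N) (l : Fin N) => ((r l).descFactorial i : ℝ)).det =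
      (Matrix.vandermonde fun l => (r l : ℝ)).det := by
    intro r
    rw [← vdm_desc, ← Matrix.det_transpose]; rfl
  have hB : ∀ r : Fin N → ℕ, (Matrix.of fun (l : Fin N) (j : Fin N) => cf α β j (r l) * x ^ (r l)).det =
      (∏ l, (wt α β (r l) * x ^ (r l))) * (Matrix.vandermonde fun l => (r l : ℝ)).det := by
    intro r
    rw [← vdm_asc α, ← Matrix.det_mul_column]
    congr 1
    ext l j
    simp [cf]; ring
  simp only [hA, hB] at h0
  have h1 := h0 (fun r => by
    rw [mul_left_comm, ← mul_assoc, mul_assoc]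
    refine mul_nonneg (Finset.prod_nonneg fun l _ => ?_) (mul_self_nonneg _)
    have := wt_pos α β (r l)
    positivity)
  have e : (Matrix.of fun i j : Fin N => x ^ (i : ℕ) * iteratedDeriv i (Ff α β j) x).det
      = (∏ i : Fin N, x ^ (i : ℕ)) * Wf α β N x :=
    Matrix.det_mul_column (fun i : Fin N => x ^ (i : ℕ)) (Matrix.of fun i j : Fin N => iteratedDeriv i (Ff α β j) x)
  rw [e] at h1
  have e2 : tm α β N x = fun r : Fin N → ℕ => (Matrix.vandermonde fun l => (r l : ℝ)).det * ((∏ l, (wt α β (r l) * x ^ (r l))) * (Matrix.vandermonde fun l => (r l : ℝ)).det) := by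
    funext r; unfold tm; ring
  rw [e2]
  exact h1

lemma tm_nonneg (α β N : ℕ) (x : ℝ) (hx : 0 ≤ x) (r : Fin N → ℕ) : 0 ≤ tm α β N x r := by
  unfold tm
  refine mul_nonneg (sq_nonneg _) (Finset.prod_nonneg fun l _ => ?_)
  have := wt_pos α β (r l)
  positivity

lemma Wf_pos {α β : ℕ} (h : α ≤ β) (N : ℕ) (x : ℝ) (hx : 0 < x) : 0 < Wf α β N x := by
  have h1 := Wf_hasSum h N x hx.le
  have h2 : 0 < tm α β N x (fun l => l) := by
    unfold tm
    refine mul_pos ?_ (Finset.prod_pos fun l _ => ?_)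
    · have : (Matrix.vandermonde fun l : Fin N => ((l : ℕ) : ℝ)).det ≠ 0 := by
        rw [Matrix.det_vandermonde_ne_zero_iff]
        intro a b hab
        have : (a : ℕ) = b := by simpa using hab
        exact Fin.ext this
      positivity
    · have := wt_pos α β l
      positivity
  have h3 := h2.trans_le (le_hasSum h1 _ (fun r _ => tm_nonneg α β N x hx.le r))
  have h4 : 0 < (N.factorial : ℝ) := by positivity
  have h5 : 0 < ∏ i : Fin N, x ^ (i : ℕ) := Finset.prod_pos fun i _ => by positivity
  rw [← mul_assoc] at h3
  exact (pos_iff_pos_of_mul_pos h3).1 (by positivity)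

lemma Wf_zero {α β : ℕ} (h : α ≤ β) (N : ℕ) : Wf α β N 0 ≠ 0 := by
  unfold Wf Ff
  simp only [(cf_ent h _).iteratedDeriv_zero]
  have e : (Matrix.of fun i j : Fin N => ((i : ℕ).factorial : ℝ) * cf α β j i).det
      = (∏ i : Fin N, (((i : ℕ).factorial : ℝ) * wt α β i)) * (Matrix.of fun l j : Fin N => (((l : ℕ) + α + 1).ascFactorial j : ℝ)).det := by
    rw [← Matrix.det_mul_column]
    congr 1
    ext i j
    simp [cf]; ring
  rw [e, vdm_asc α (fun l : Fin N => (l : ℕ))]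
  refine mul_ne_zero (Finset.prod_ne_zero_iff.2 fun i _ => ?_) ?_
  · have := wt_pos α β i
    positivity
  · rw [Matrix.det_vandermonde_ne_zero_iff]
    intro a b hab
    have : (a : ℕ) = b := by simpa using hab
    exact Fin.ext this

lemma Wf_analytic {α β : ℕ} (h : α ≤ β) (N : ℕ) (x : ℝ) : AnalyticAt ℝ (Wf α β N) x := by
  have e : Wf α β N = fun x => ∑ σ : Equiv.Perm (Fin N), ((Equiv.Perm.sign σ : ℤ) : ℝ) *
     ∏ i : Fin N, iteratedDeriv (σ i) (Ff α β i) x := by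
    funext x
    unfold Wf
    rw [Matrix.det_apply']
    simp
  rw [e]
  refine Finset.analyticAt_fun_sum _ fun σ _ => ?_
  refine analyticAt_const.mul ?_
  refine Finset.analyticAt_fun_prod _ fun i _ => ?_
  have := (cf_ent h i).iteratedDeriv (σ i)
  unfold Ff
  rw [this.2]
  exact this.1.analytic x

end PainA

namespace PainA

/-- shifted row lengths, increasing -/
def Lr (p : ℕ) (μ : YoungDiagram) : Fin p → ℕ := fun a => μ.rowLen (p - 1 - a) + a

lemma Lr_strictMono (p : ℕ) (μ : YoungDiagram) : StrictMono (Lr p μ) := by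
  intro a b hab
  have h : (a : ℕ) < b := hab
  have := μ.rowLen_anti (p - 1 - b) (p - 1 - a) (by omega)
  simp only [Lr]; omega

/-- row function from increasing sequence -/
def ro {p : ℕ} (L : Fin p → ℕ) (i : ℕ) : ℕ :=
  if h : i < p then L ⟨p - 1 - i, by omega⟩ - (p - 1 - i) else 0

lemma ro_anti {p : ℕ} {L : Fin p → ℕ} (hL : StrictMono L) : Antitone (ro L) := by
  refine antitone_nat_of_succ_le fun i => ?_
  unfold ro
  by_cases h : i + 1 < p
  · have h' : i < p := by omega
    simp only [h, h', dif_pos]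
    have : L ⟨p - 1 - (i + 1), by omega⟩ < L ⟨p - 1 - i, by omega⟩ := hL (by
      rw [Fin.mk_lt_mk]; omega)
    omega
  · simp [h]

lemma le_of_strictMono {p : ℕ} {L : Fin p → ℕ} (hL : StrictMono L) (a : Fin p) : (a : ℕ) ≤ L a := by
  obtain ⟨a, ha⟩ := a
  induction a with
  | zero => simp
  | succ a ih =>
    have h1 := ih (by omega)
    have : L ⟨a, by omega⟩ < L ⟨a + 1, ha⟩ := hL (by rw [Fin.mk_lt_mk]; omega)
    simp only at *
    omega

/-- Young diagram from increasing sequence -/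
def mkY {p : ℕ} (L : Fin p → ℕ) : YoungDiagram where
  cells := (Finset.range p ×ˢ Finset.range (ro L 0)).filter fun c => ∀ i ≤ c.1, c.2 < ro L i
  isLowerSet := by
    rintro ⟨i, j⟩ ⟨i', j'⟩ ⟨h1, h2⟩ h
    simp only [Finset.coe_filter, Finset.mem_product, Finset.mem_range, Set.mem_ofPred_eq] at *
    change i' ≤ i at h1
    change j' ≤ j at h2
    refine ⟨⟨by omega, by omega⟩, fun k hk => ?_⟩
    have := h.2 k (by omega)
    omega

lemma mem_mkY {p : ℕ} {L : Fin p → ℕ} (hL : StrictMono L) (i j : ℕ) : (i, j) ∈ mkY L ↔ j < ro L i := by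
  rw [← YoungDiagram.mem_cells]
  simp only [mkY, Finset.mem_filter, Finset.mem_product, Finset.mem_range]
  constructor
  · intro h; exact h.2 i le_rfl
  · intro h
    have h0 := ro_anti hL (Nat.zero_le i)
    refine ⟨⟨?_, by omega⟩, fun k hk => ?_⟩
    · by_contra hi
      simp [ro, hi] at h
    · have := ro_anti hL hk
      omega

lemma rowLen_mkY {p : ℕ} {L : Fin p → ℕ} (hL : StrictMono L) (i : ℕ) : (mkY L).rowLen i = ro L i := by
  have h : ∀ j, j < (mkY L).rowLen i ↔ j < ro L i := fun j => by
    rw [← YoungDiagram.mem_iff_lt_rowLen, mem_mkY hL]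
  have h1 := h (ro L i)
  have h2 := h ((mkY L).rowLen i)
  omega

lemma rowLen_mkY_p {p : ℕ} {L : Fin p → ℕ} (hL : StrictMono L) : (mkY L).rowLen p = 0 := by
  rw [rowLen_mkY hL]; simp [ro]

lemma Lr_mkY {p : ℕ} {L : Fin p → ℕ} (hL : StrictMono L) : Lr p (mkY L) = L := by
  funext a
  simp only [Lr, rowLen_mkY hL]
  have ha := a.2
  have := le_of_strictMono hL a
  have h1 : p - 1 - a < p := by omega
  have h2 : p - 1 - (p - 1 - (a : ℕ)) = a := by omega
  simp only [ro, h1, dif_pos, h2, Fin.eta]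
  omega

lemma YD_ext {μ ν : YoungDiagram} (h : ∀ i, μ.rowLen i = ν.rowLen i) : μ = ν := by
  ext ⟨i, j⟩
  rw [YoungDiagram.mem_cells, YoungDiagram.mem_cells, YoungDiagram.mem_iff_lt_rowLen, YoungDiagram.mem_iff_lt_rowLen, h]

lemma mkY_Lr {p : ℕ} {μ : YoungDiagram} (h : μ.rowLen p = 0) : mkY (Lr p μ) = μ := by
  apply YD_ext
  intro i
  rw [rowLen_mkY (Lr_strictMono p μ)]
  unfold ro
  split_ifs with hi
  · simp only [Lr]
    rw [show p - 1 - (p - 1 - i) = i by omega]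
    omega
  · have := μ.rowLen_anti p i (by omega)
    omega

/-! semistandard tableaux -/

def SS (μ : YoungDiagram) (p : ℕ) : Set (SemistandardYoungTableau μ) :=
  {T | ∀ c ∈ μ.cells, T c.1 c.2 < p}

lemma SS_finite (μ : YoungDiagram) (p : ℕ) : (SS μ p).Finite := by
  refine Set.Finite.of_injOn (t := (Set.univ : Set (μ.cells → Fin (p + 1))))
    (f := fun T c => Fin.ofNat (p + 1) (T c.1.1 c.1.2)) (fun _ _ => Set.mem_univ _) ?_ Set.finite_univ
  intro T hT T' hT' h
  refine SemistandardYoungTableau.ext fun i j => ?_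
  by_cases hc : (i, j) ∈ μ
  · have h1 := congrFun h ⟨(i, j), hc⟩
    have h2 := hT (i, j) hc
    have h3 := hT' (i, j) hc
    simp only [Fin.ofNat, Fin.mk.injEq] at h1 h2 h3
    rwa [Nat.mod_eq_of_lt (by omega), Nat.mod_eq_of_lt (by omega)] at h1
  · rw [T.zeros hc, T'.zeros hc]

lemma SSYT_ge {μ : YoungDiagram} (T : SemistandardYoungTableau μ) (i : ℕ) (h : (i, 0) ∈ μ) : i ≤ T i 0 := by
  induction i with
  | zero => simp
  | succ i ih =>
    have h1 := ih (μ.up_left_mem (Nat.le_succ i) le_rfl h)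
    have := T.col_strict (show i < i + 1 by omega) h
    omega

lemma numSSYT_eq_zero (μ : YoungDiagram) (p : ℕ) (h : μ.rowLen p ≠ 0) : numSSYT μ p = 0 := by
  change (SS μ p).ncard = 0
  rw [Set.ncard_eq_zero (SS_finite μ p)]
  rw [Set.eq_empty_iff_forall_notMem]
  intro T hT
  have hm : (p, 0) ∈ μ := YoungDiagram.mem_iff_lt_rowLen.2 (by omega)
  have := hT (p, 0) hm
  have := SSYT_ge T p hm
  simp only at *
  omega

def trunc {μ : YoungDiagram} (p : ℕ) (T : SemistandardYoungTableau μ) : YoungDiagram where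
  cells := μ.cells.filter fun c => T c.1 c.2 < p
  isLowerSet := by
    rintro ⟨i, j⟩ ⟨i', j'⟩ ⟨h1, h2⟩ h
    simp only [Finset.coe_filter, Set.mem_ofPred_eq, YoungDiagram.mem_cells] at *
    change i' ≤ i at h1
    change j' ≤ j at h2
    refine ⟨μ.up_left_mem h1 h2 h.1, ?_⟩
    have e1 := T.col_weak h1 (μ.up_left_mem le_rfl h2 h.1)
    have e2 := T.row_weak_of_le h2 h.1
    omega

lemma mem_trunc {μ : YoungDiagram} (p : ℕ) (T : SemistandardYoungTableau μ) (i j : ℕ) :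
    (i, j) ∈ trunc p T ↔ (i, j) ∈ μ ∧ T i j < p := by
  rw [← YoungDiagram.mem_cells]
  simp [trunc]

lemma rowLen_le_of {μ ν : YoungDiagram} {i i' : ℕ} (h : ∀ j, (i, j) ∈ μ → (i', j) ∈ ν) : μ.rowLen i ≤ ν.rowLen i' := by
  by_contra hc
  have := h (ν.rowLen i') (YoungDiagram.mem_iff_lt_rowLen.2 (by omega))
  rw [YoungDiagram.mem_iff_lt_rowLen] at this
  omega

def extT {lam μ : YoungDiagram} (p : ℕ) (T : SemistandardYoungTableau μ) (hT : T ∈ SS μ p)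
    (hle : ∀ i j, (i, j) ∈ μ → (i, j) ∈ lam) (hst : ∀ i j, (i + 1, j) ∈ lam → (i, j) ∈ μ) :
    SemistandardYoungTableau lam where
  entry i j := if (i, j) ∈ μ then T i j else if (i, j) ∈ lam then p else 0
  row_weak' := by
    intro i j1 j2 hj h
    have h1 : (i, j1) ∈ lam := lam.up_left_mem le_rfl hj.le h
    by_cases h2 : (i, j2) ∈ μ
    · have h3 : (i, j1) ∈ μ := μ.up_left_mem le_rfl hj.le h2
      simp only [h2, h3, if_true]
      exact T.row_weak hj h2
    · simp only [h2, h, h1, if_true, if_false]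
      split_ifs with h3
      · exact (hT (i, j1) h3).le
      · exact le_rfl
  col_strict' := by
    intro i1 i2 j hi h
    have h1 : (i1, j) ∈ μ := hst i1 j (lam.up_left_mem hi le_rfl h)
    by_cases h2 : (i2, j) ∈ μ
    · simp only [h2, h1, if_true]
      exact T.col_strict hi h2
    · simp only [h2, h, h1, if_true, if_false]
      exact hT (i1, j) h1
  zeros' := by
    intro i j h
    have : (i, j) ∉ μ := fun h' => h (hle i j h')
    simp [h, this]

lemma extT_apply {lam μ : YoungDiagram} (p : ℕ) (T : SemistandardYoungTableau μ) (hT : T ∈ SS μ p)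
    (hle : ∀ i j, (i, j) ∈ μ → (i, j) ∈ lam) (hst : ∀ i j, (i + 1, j) ∈ lam → (i, j) ∈ μ) (i j : ℕ) :
    extT p T hT hle hst i j = if (i, j) ∈ μ then T i j else if (i, j) ∈ lam then p else 0 := rfl

def resT {lam : YoungDiagram} (μ : YoungDiagram) (T : SemistandardYoungTableau lam) 
    (hle : ∀ i j, (i, j) ∈ μ → (i, j) ∈ lam) : SemistandardYoungTableau μ where
  entry i j := if (i, j) ∈ μ then T i j else 0
  row_weak' := by
    intro i j1 j2 hj h
    have h1 : (i, j1) ∈ μ := μ.up_left_mem le_rfl hj.le h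
    simp only [h, h1, if_true]
    exact T.row_weak hj (hle _ _ h)
  col_strict' := by
    intro i1 i2 j hi h
    have h1 : (i1, j) ∈ μ := μ.up_left_mem hi.le le_rfl h
    simp only [h, h1, if_true]
    exact T.col_strict hi (hle _ _ h)
  zeros' := by
    intro i j h
    simp [h]

lemma resT_apply {lam : YoungDiagram} (μ : YoungDiagram) (T : SemistandardYoungTableau lam) 
    (hle : ∀ i j, (i, j) ∈ μ → (i, j) ∈ lam) (i j : ℕ) : resT μ T hle i j = if (i, j) ∈ μ then T i j else 0 := rfl

lemma fiber_card (lam μ : YoungDiagram) (p : ℕ) (hle : ∀ i j, (i, j) ∈ μ → (i, j) ∈ lam)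
    (hst : ∀ i j, (i + 1, j) ∈ lam → (i, j) ∈ μ) :
    {T ∈ SS lam (p + 1) | trunc p T = μ}.ncard = (SS μ p).ncard := by
  symm
  refine Set.ncard_congr (fun T hT => extT p T hT hle hst) ?_ ?_ ?_
  · intro T hT
    refine ⟨?_, ?_⟩
    · rintro ⟨i, j⟩ hc
      simp only [extT_apply]
      have hc' : (i, j) ∈ lam := hc
      split_ifs with h
      · have := hT (i, j) h; simp only at this; omega
      · omega
    · ext ⟨i, j⟩
      rw [YoungDiagram.mem_cells, YoungDiagram.mem_cells, mem_trunc, extT_apply]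
      constructor
      · rintro ⟨h1, h2⟩
        by_contra h
        simp [h, h1] at h2
      · intro h
        have := hT (i, j) h
        simp only at this
        simp [h, hle i j h, this]
  · intro T T' hT hT' h
    refine SemistandardYoungTableau.ext fun i j => ?_
    by_cases hc : (i, j) ∈ μ
    · have := congrArg (fun T : SemistandardYoungTableau lam => T i j) h
      simpa [extT_apply, hc] using this
    · rw [T.zeros hc, T'.zeros hc]
  · rintro T ⟨hT, hμ⟩
    have hres : resT μ T hle ∈ SS μ p := by
      rintro ⟨i, j⟩ hc
      have hc' : (i, j) ∈ μ := hc
      simp only [resT_apply, hc', if_true]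
      rw [← hμ, mem_trunc] at hc'
      exact hc'.2
    refine ⟨resT μ T hle, hres, ?_⟩
    refine SemistandardYoungTableau.ext fun i j => ?_
    rw [extT_apply, resT_apply]
    split_ifs with h h'
    · rfl
    · have h1 := hT (i, j) h'
      rw [← hμ, mem_trunc] at h
      simp only [h', true_and] at h
      simp only at h1
      omega
    · rw [T.zeros h']

lemma det_choose_step (p : ℕ) (L : Fin (p + 1) → ℕ) (hL : StrictMono L) :
    ∑ M ∈ Fintype.piFinset (fun a : Fin p => Finset.Ico (L a.castSucc) (L a.succ)),
      (Matrix.of fun a j : Fin p => ((M a).choose j : ℝ)).det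
    = (Matrix.of fun a j : Fin (p + 1) => ((L a).choose j : ℝ)).det := by
  rw [← det_sum_rows p (fun a : Fin p => Finset.Ico (L a.castSucc) (L a.succ)) (fun _ k j => (k.choose j : ℝ))]
  have hs : ∀ (a : Fin p) (j : ℕ), ∑ k ∈ Finset.Ico (L a.castSucc) (L a.succ), (k.choose j : ℝ)
      = ((L a.succ).choose (j + 1) : ℝ) - ((L a.castSucc).choose (j + 1) : ℝ) := by
    intro a j
    have : L a.castSucc ≤ L a.succ := hL.monotone (Fin.castSucc_lt_succ (i := a)).le
    rw [← Finset.sum_Ico_sub (fun k => (k.choose (j + 1) : ℝ)) this]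
    refine Finset.sum_congr rfl fun k _ => ?_
    rw [Nat.choose_succ_succ' k j]; push_cast; ring
  simp only [hs]
  let B : Matrix (Fin (p + 1)) (Fin (p + 1)) ℝ := Matrix.of fun a j =>
    Fin.cases ((L 0).choose j : ℝ) (fun a => ((L a.succ).choose j : ℝ) - ((L a.castSucc).choose j : ℝ)) a
  rw [Matrix.det_eq_of_forall_row_eq_smul_add_pred (B := B) (fun _ => 1)]
  · rw [Matrix.det_succ_column_zero, Finset.sum_eq_single 0]
    · simp [B, Matrix.submatrix]
    · intro a _ ha
      obtain ⟨b, rfl⟩ := Fin.exists_succ_eq.2 ha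
      simp [B]
    · simp
  · intro j; simp [B]
  · intro a j; simp [B]

theorem numSSYT_det (p : ℕ) (lam : YoungDiagram) (h : lam.rowLen p = 0) :
    (numSSYT lam p : ℝ) = (Matrix.of fun a j : Fin p => ((Lr p lam a).choose j : ℝ)).det := by
  induction p generalizing lam with
  | zero =>
    have hemp : ∀ i j, (i, j) ∉ lam := by
      intro i j hm
      rw [YoungDiagram.mem_iff_lt_rowLen] at hm
      have := lam.rowLen_anti 0 i (Nat.zero_le _)
      omega
    have : SS lam 0 = {SemistandardYoungTableau.highestWeight lam} := by
      ext T
      simp only [Set.mem_singleton_iff]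
      constructor
      · intro _
        refine SemistandardYoungTableau.ext fun i j => ?_
        rw [T.zeros (hemp i j), (SemistandardYoungTableau.highestWeight lam).zeros (hemp i j)]
      · rintro _ ⟨i, j⟩ hc
        exact absurd hc (hemp i j)
    have h2 : numSSYT lam 0 = 1 := by
      show (SS lam 0).ncard = 1
      rw [this]; simp
    rw [h2]; simp
  | succ p ih =>
    rw [← det_choose_step p _ (Lr_strictMono _ _)]
    set Q := Fintype.piFinset (fun a : Fin p => Finset.Ico (Lr (p + 1) lam a.castSucc) (Lr (p + 1) lam a.succ)) with hQ
    have hQm : ∀ M ∈ Q, StrictMono M := by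
      intro M hM a b hab
      simp only [hQ, Fintype.mem_piFinset, Finset.mem_Ico] at hM
      have h1 := (hM a).2
      have h2 := (hM b).1
      have h3 : Lr (p + 1) lam a.succ ≤ Lr (p + 1) lam b.castSucc := (Lr_strictMono (p + 1) lam).monotone (by
        rw [Fin.le_def]; simpa using hab)
      omega
    have hfin := SS_finite lam (p + 1)
    classical
    have hcard : (SS lam (p + 1)).ncard = ∑ μ ∈ Q.image mkY, {T ∈ SS lam (p + 1) | trunc p T = μ}.ncard := by
      rw [Set.ncard_eq_toFinset_card _ hfin, Finset.card_eq_sum_card_fiberwise (f := trunc p) (t := Q.image mkY)]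
      · refine Finset.sum_congr rfl fun μ _ => ?_
        rw [← Set.ncard_coe_finset]
        congr 1
        ext T
        simp
      · intro T hT
        simp only [Set.Finite.coe_toFinset] at hT
        have hp0 : (trunc p T).rowLen p = 0 := by
          by_contra hne
          have hm : (p, 0) ∈ trunc p T := YoungDiagram.mem_iff_lt_rowLen.2 (by omega)
          rw [mem_trunc] at hm
          have := SSYT_ge T p hm.1
          omega
        simp only [Finset.coe_image, Set.mem_image, Finset.mem_coe]
        refine ⟨Lr p (trunc p T), ?_, mkY_Lr hp0⟩
        simp only [hQ, Fintype.mem_piFinset, Finset.mem_Ico]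
        intro a
        have ha := a.2
        have h1 : (trunc p T).rowLen (p - 1 - a) ≤ lam.rowLen (p - 1 - a) := 
          rowLen_le_of fun j hj => ((mem_trunc _ _ _ _).1 hj).1
        have h2 : lam.rowLen (p - a) ≤ (trunc p T).rowLen (p - 1 - a) := by
          refine rowLen_le_of fun j hj => ?_
          rw [mem_trunc]
          refine ⟨lam.up_left_mem (by omega) le_rfl hj, ?_⟩
          have e1 := hT (p - a, j) hj
          have e2 := T.col_strict (show p - 1 - (a : ℕ) < p - a by omega) hj
          simp only at e1
          omega
        simp only [Lr, Fin.val_castSucc, Fin.val_succ, Nat.add_sub_cancel]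
        rw [show p - ((a : ℕ) + 1) = p - 1 - a by omega]
        omega
    have hnum : (numSSYT lam (p + 1) : ℝ) = ((SS lam (p + 1)).ncard : ℝ) := rfl
    rw [hnum, hcard, Finset.sum_image]
    · push_cast
      refine Finset.sum_congr rfl fun M hM => ?_
      have hMm := hQm M hM
      have hr := rowLen_mkY_p hMm
      rw [fiber_card]
      · have := ih (mkY M) hr
        rw [Lr_mkY hMm] at this
        exact this
      · intro i j hij
        rw [YoungDiagram.mem_iff_lt_rowLen] at *
        by_cases hi : i < p
        · have h1 := (Finset.mem_Ico.1 (Fintype.mem_piFinset.1 hM ⟨p - 1 - i, by omega⟩)).2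
          rw [← Lr_mkY hMm] at h1
          simp only [Lr, Fin.val_succ, Nat.add_sub_cancel] at h1
          rw [show p - 1 - (p - 1 - i) = i by omega, show p - (p - 1 - i + 1) = i by omega] at h1
          omega
        · have := (mkY M).rowLen_anti p i (by omega)
          omega
      · intro i j hij
        rw [YoungDiagram.mem_iff_lt_rowLen] at *
        by_cases hi : i < p
        · have h1 := (Finset.mem_Ico.1 (Fintype.mem_piFinset.1 hM ⟨p - 1 - i, by omega⟩)).1
          rw [← Lr_mkY hMm] at h1
          simp only [Lr, Fin.val_castSucc, Nat.add_sub_cancel] at h1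
          rw [show p - 1 - (p - 1 - i) = i by omega, show p - (p - 1 - i) = i + 1 by omega] at h1
          omega
        · have := lam.rowLen_anti (p + 1) (i + 1) (by omega)
          omega
    · intro M hM M' hM' he
      rw [← Lr_mkY (hQm M hM), ← Lr_mkY (hQm M' hM'), he]

lemma det_choose {p : ℕ} (L : Fin p → ℕ) :
    (∏ j : Fin p, ((j : ℕ).factorial : ℝ)) * (Matrix.of fun a j : Fin p => ((L a).choose j : ℝ)).det
      = (Matrix.vandermonde fun a => (L a : ℝ)).det := by
  rw [← vdm_desc, ← Matrix.det_mul_row]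
  congr 1
  ext a j
  simp only [Matrix.of_apply]
  rw [Nat.descFactorial_eq_factorial_mul_choose]; push_cast; ring

end PainA

namespace PainA

lemma hook_facts (lam : YoungDiagram) (p : ℕ) (h : lam.rowLen p = 0) (j : ℕ) : lam.colLen j ≤ p := by
  by_contra hc
  have : (p, j) ∈ lam := YoungDiagram.mem_iff_lt_colLen.2 (by omega)
  rw [YoungDiagram.mem_iff_lt_rowLen] at this
  omega

lemma prod_Icc_fact (m : ℕ) : ∏ x ∈ Finset.Icc 1 m, x = m.factorial := by
  induction m with
  | zero => simp
  | succ m ih => rw [Finset.prod_Icc_succ_top (by omega), ih, Nat.factorial_succ, mul_comm]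

lemma row_hook (lam : YoungDiagram) (p : ℕ) (h : lam.rowLen p = 0) (a : Fin p) :
    (∏ j ∈ Finset.range (lam.rowLen (p - 1 - a)), hookLen lam (p - 1 - a, j)) *
      (∏ b ∈ Finset.Iio a, (Lr p lam a - Lr p lam b)) = (Lr p lam a).factorial := by
  have ha := a.2
  set i := p - 1 - (a : ℕ) with hi
  have hmem : ∀ k j, k < lam.colLen j ↔ j < lam.rowLen k := fun k j => by
    rw [← YoungDiagram.mem_iff_lt_colLen, YoungDiagram.mem_iff_lt_rowLen]
  have hinjf : Set.InjOn (fun j => hookLen lam (i, j)) (Finset.range (lam.rowLen i)) := by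
    intro j hj j' hj' he
    simp only [Finset.coe_range, Set.mem_Iio] at hj hj'
    have h1 := (hmem i j).2 hj
    have h2 := (hmem i j').2 hj'
    simp only [hookLen] at he
    rcases lt_trichotomy j j' with hlt | heq | hlt
    · have := lam.colLen_anti j j' hlt.le
      omega
    · exact heq
    · have := lam.colLen_anti j' j hlt.le
      omega
  have hinjg : Set.InjOn (fun b => Lr p lam a - Lr p lam b) (Finset.Iio a) := by
    intro b hb b' hb' he
    simp only [Finset.coe_Iio, Set.mem_Iio] at hb hb'
    have h1 := Lr_strictMono p lam hb
    have h2 := Lr_strictMono p lam hb'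
    simp only at he
    exact (Lr_strictMono p lam).injective (by omega)
  rw [← Finset.prod_image (f := fun x => x) hinjf, ← Finset.prod_image (f := fun x => x) hinjg]
  have hdisj : Disjoint ((Finset.range (lam.rowLen i)).image fun j => hookLen lam (i, j))
      ((Finset.Iio a).image fun b => Lr p lam a - Lr p lam b) := by
    rw [Finset.disjoint_left]
    intro x hx hx'
    simp only [Finset.mem_image, Finset.mem_range, Finset.mem_Iio] at hx hx'
    obtain ⟨j, hj, rfl⟩ := hx
    obtain ⟨b, hb, he⟩ := hx'
    have h1 := (hmem i j).2 hj
    have h2 := Lr_strictMono p lam hb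
    have h3 := hmem (p - 1 - b) j
    have hb' : (b : ℕ) < a := hb
    have := hook_facts lam p h j
    have h4 := lam.rowLen_anti i (p - 1 - b) (by omega)
    simp only [hookLen, Lr] at he h2
    rw [← hi] at he h2
    omega
  rw [← Finset.prod_union hdisj]
  have heq : ((Finset.range (lam.rowLen i)).image fun j => hookLen lam (i, j)) ∪
      ((Finset.Iio a).image fun b => Lr p lam a - Lr p lam b) = Finset.Icc 1 (Lr p lam a) := by
    apply Finset.eq_of_subset_of_card_le
    · intro x hx
      simp only [Finset.mem_union, Finset.mem_image, Finset.mem_range, Finset.mem_Iio] at hx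
      rw [Finset.mem_Icc]
      rcases hx with ⟨j, hj, rfl⟩ | ⟨b, hb, rfl⟩
      · have h1 := (hmem i j).2 hj
        have := hook_facts lam p h j
        simp only [hookLen, Lr]
        rw [← hi]
        omega
      · have h2 := Lr_strictMono p lam hb
        omega
    · rw [Finset.card_union_of_disjoint hdisj, Finset.card_image_of_injOn hinjf, Finset.card_image_of_injOn hinjg]
      simp only [Nat.card_Icc, Finset.card_range, Fin.card_Iio, Lr]
      rw [← hi]; omega
  rw [heq, prod_Icc_fact]

lemma prod_rev (p : ℕ) (F : ℕ → ℕ) : ∏ i ∈ Finset.range p, F i = ∏ a : Fin p, F (p - 1 - a) := by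
  rw [← Finset.prod_range_reflect, ← Fin.prod_univ_eq_prod_range (fun i => F (p - 1 - i))]

lemma sum_rev (p : ℕ) (F : ℕ → ℕ) : ∑ i ∈ Finset.range p, F i = ∑ a : Fin p, F (p - 1 - a) := by
  rw [← Finset.sum_range_reflect, ← Fin.sum_univ_eq_sum_range (fun i => F (p - 1 - i))]

lemma cells_maps (lam : YoungDiagram) (p : ℕ) (h : lam.rowLen p = 0) : ∀ c ∈ lam.cells, c.1 ∈ Finset.range p := by
  rintro ⟨i, j⟩ hc
  have hc' : (i, j) ∈ lam := hc
  rw [YoungDiagram.mem_iff_lt_rowLen] at hc'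
  rw [Finset.mem_range]
  by_contra hi
  have := lam.rowLen_anti p i (by simpa using hi)
  omega

lemma hookProd_eq (lam : YoungDiagram) (p : ℕ) (h : lam.rowLen p = 0) :
    hookProd lam = ∏ a : Fin p, ∏ j ∈ Finset.range (lam.rowLen (p - 1 - a)), hookLen lam (p - 1 - a, j) := by
  rw [← prod_rev p (fun i => ∏ j ∈ Finset.range (lam.rowLen i), hookLen lam (i, j))]
  unfold hookProd
  rw [← Finset.prod_fiberwise_of_maps_to (cells_maps lam p h)]
  refine Finset.prod_congr rfl fun i _ => ?_
  have : lam.cells.filter (fun c => c.1 = i) = {i} ×ˢ Finset.range (lam.rowLen i) := YoungDiagram.row_eq_prod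
  rw [this, Finset.prod_product]
  simp

lemma card_eq (lam : YoungDiagram) (p : ℕ) (h : lam.rowLen p = 0) :
    lam.card + ∑ a : Fin p, (a : ℕ) = ∑ a : Fin p, Lr p lam a := by
  simp only [Lr, Finset.sum_add_distrib]
  rw [← sum_rev p lam.rowLen]
  congr 1
  unfold YoungDiagram.card
  rw [Finset.card_eq_sum_card_fiberwise (cells_maps lam p h)]
  refine Finset.sum_congr rfl fun i _ => ?_
  have : lam.cells.filter (fun c => c.1 = i) = {i} ×ˢ Finset.range (lam.rowLen i) := YoungDiagram.row_eq_prod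
  rw [this]; simp

lemma vdm_prod {p : ℕ} (L : Fin p → ℕ) (hL : StrictMono L) :
    (Matrix.vandermonde fun a => (L a : ℝ)).det = ((∏ a : Fin p, ∏ b ∈ Finset.Iio a, (L a - L b) : ℕ) : ℝ) := by
  rw [Matrix.det_vandermonde]
  push_cast
  rw [Finset.prod_comm' (t' := Finset.univ) (s' := fun a => Finset.Iio a) (by intro x y; simp)]
  refine Finset.prod_congr rfl fun a _ => Finset.prod_congr rfl fun b hb => ?_
  rw [Nat.cast_sub (hL (Finset.mem_Iio.1 hb)).le]

lemma hookProd_vdm (lam : YoungDiagram) (p : ℕ) (h : lam.rowLen p = 0) :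
    (hookProd lam : ℝ) * (Matrix.vandermonde fun a => (Lr p lam a : ℝ)).det = ∏ a, ((Lr p lam a).factorial : ℝ) := by
  rw [vdm_prod _ (Lr_strictMono p lam), hookProd_eq lam p h]
  have : (∏ a : Fin p, ∏ j ∈ Finset.range (lam.rowLen (p - 1 - a)), hookLen lam (p - 1 - a, j)) *
      (∏ a : Fin p, ∏ b ∈ Finset.Iio a, (Lr p lam a - Lr p lam b)) = ∏ a, (Lr p lam a).factorial := by
    rw [← Finset.prod_mul_distrib]
    exact Finset.prod_congr rfl fun a _ => row_hook lam p h a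
  exact_mod_cast this

lemma strip_row (m s k : ℕ) (h : s ≤ m) : (∏ j ∈ Finset.Ico (m - s) m, (k + m - j)) * k.factorial = (k + s).factorial := by
  induction s with
  | zero => simp
  | succ s ih =>
    have h1 := ih (by omega)
    rw [Finset.prod_eq_prod_Ico_succ_bot (by omega)]
    rw [show m - (s + 1) + 1 = m - s by omega, mul_assoc, h1, show k + (s + 1) = (k + s) + 1 by omega,
      Nat.factorial_succ, show k + m - (m - (s + 1)) = k + s + 1 by omega]

lemma Hstrip_eq (lam : YoungDiagram) (p q n : ℕ) (hpq : p ≤ q) (hqn : q ≤ n) (h : lam.rowLen p = 0)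
    (hs : ∀ i < p, n - p ≤ lam.rowLen i) :
    Hstrip n p q lam * ∏ a : Fin p, (Lr p lam a - (n - p)).factorial = ∏ a : Fin p, (Lr p lam a - (n - p) + (q - p)).factorial := by
  have e : Hstrip n p q lam = ∏ a : Fin p, ∏ j ∈ Finset.Ico (n - q) (n - p), (Lr p lam a - j) := by
    have e1 : ∀ a : Fin p, ∏ j ∈ Finset.Ico (n - q) (n - p), (Lr p lam a - j) =
       ∏ j ∈ Finset.Ico (n - q) (n - p), hookLen lam (p - 1 - a, j) := by
      intro a
      have ha := a.2
      refine Finset.prod_congr rfl fun j hj => ?_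
      rw [Finset.mem_Ico] at hj
      have h1 : lam.colLen j = p := by
        apply le_antisymm (hook_facts lam p h j)
        have : (p - 1, j) ∈ lam := YoungDiagram.mem_iff_lt_rowLen.2 (by
          have := hs (p - 1) (by omega)
          omega)
        rw [YoungDiagram.mem_iff_lt_colLen] at this
        omega
      simp only [hookLen, Lr, h1]
      omega
    simp only [e1]
    rw [← prod_rev p (fun i => ∏ j ∈ Finset.Ico (n - q) (n - p), hookLen lam (i, j))]
    unfold Hstrip
    rw [← Finset.prod_fiberwise_of_maps_to (g := fun c => c.1) (t := Finset.range p) (fun c hc => cells_maps lam p h c (Finset.mem_filter.1 hc).1)]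
    refine Finset.prod_congr rfl fun i hi => ?_
    have : (lam.cells.filter (fun c => n - q ≤ c.2 ∧ c.2 < n - p)).filter (fun c => c.1 = i) = {i} ×ˢ Finset.Ico (n - q) (n - p) := by
      ext ⟨i', j⟩
      simp only [Finset.mem_filter, YoungDiagram.mem_cells, Finset.mem_product, Finset.mem_singleton, Finset.mem_Ico]
      constructor
      · rintro ⟨⟨_, h1⟩, h2⟩; exact ⟨h2, h1⟩
      · rintro ⟨rfl, h1⟩
        refine ⟨⟨?_, h1⟩, rfl⟩
        rw [YoungDiagram.mem_iff_lt_rowLen]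
        have := hs i' (Finset.mem_range.1 hi)
        omega
    rw [this, Finset.prod_product]
    simp
  rw [e, ← Finset.prod_mul_distrib]
  refine Finset.prod_congr rfl fun a _ => ?_
  have ha := a.2
  have := strip_row (n - p) (q - p) (Lr p lam a - (n - p)) (by omega)
  rw [← this]
  have h2 : n - p ≤ Lr p lam a := by
    have := hs (p - 1 - a) (by omega)
    simp only [Lr]; omega
  rw [show n - p - (q - p) = n - q by omega, Nat.sub_add_cancel h2]

/-- weight of a diagram -/
def Tw (p q n : ℕ) (lam : YoungDiagram) : ℝ :=
  (numSSYT lam p : ℝ) / (hookProd lam : ℝ) * (indSup n p lam * (Hstrip n p q lam : ℝ))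

lemma indSup_nonneg (n p : ℕ) (lam : YoungDiagram) : 0 ≤ indSup n p lam := by
  unfold indSup; split_ifs <;> norm_num

lemma Tw_nonneg (p q n : ℕ) (lam : YoungDiagram) : 0 ≤ Tw p q n lam := by
  unfold Tw
  have := indSup_nonneg n p lam
  positivity

def sfp (p : ℕ) : ℝ := ∏ j : Fin p, ((j : ℕ).factorial : ℝ)

lemma sfp_pos (p : ℕ) : 0 < sfp p := Finset.prod_pos fun j _ => by positivity

lemma Tw_mkY (p q n : ℕ) (hpq : p ≤ q) (hqn : q ≤ n) (k : Fin p → ℕ) (hk : StrictMono k) (x : ℝ) :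
    Tw p q n (mkY fun a => k a + (n - p)) * x ^ (mkY fun a => k a + (n - p)).card * (sfp p * ∏ i : Fin p, x ^ (i : ℕ))
      = x ^ (p * (n - p)) * tm (q - p) (n - p) p x k := by
  have hL : StrictMono fun a => k a + (n - p) := fun a b hab => by
    have := hk hab
    simp only; omega
  set lam := mkY fun a => k a + (n - p) with hlam
  have hLr : Lr p lam = fun a => k a + (n - p) := Lr_mkY hL
  have h0 : lam.rowLen p = 0 := rowLen_mkY_p hL
  have hs : ∀ i < p, n - p ≤ lam.rowLen i := by
    intro i hi
    rw [hlam, rowLen_mkY hL]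
    simp only [ro, hi, dif_pos]
    have := le_of_strictMono hk ⟨p - 1 - i, by omega⟩
    simp only at this
    omega
  have hind : indSup n p lam = 1 := by
    unfold indSup; rw [if_pos hs]
  have hV : (Matrix.vandermonde fun a => (Lr p lam a : ℝ)).det = (Matrix.vandermonde fun a => (k a : ℝ)).det := by
    rw [hLr, ← Matrix.det_vandermonde_add (fun a => (k a : ℝ)) ((n - p : ℕ) : ℝ)]
    push_cast; rfl
  have hVne : (Matrix.vandermonde fun a => (k a : ℝ)).det ≠ 0 := by
    rw [Matrix.det_vandermonde_ne_zero_iff]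
    intro a b hab
    exact hk.injective (by simpa using hab)
  have h1 := det_choose (Lr p lam)
  rw [← numSSYT_det p lam h0, hV] at h1
  have h2 := hookProd_vdm lam p h0
  rw [hV] at h2
  have h3 : (Hstrip n p q lam : ℝ) * ∏ a : Fin p, ((k a).factorial : ℝ) = ∏ a : Fin p, ((k a + (q - p)).factorial : ℝ) := by
    have := Hstrip_eq lam p q n hpq hqn h0 hs
    simp only [hLr, Nat.add_sub_cancel] at this
    exact_mod_cast this
  have hcard := card_eq lam p h0
  rw [hLr] at h2 hcard
  have h4 : x ^ lam.card * ∏ i : Fin p, x ^ (i : ℕ) = x ^ (p * (n - p)) * ∏ a, x ^ (k a) := by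
    rw [Finset.prod_pow_eq_pow_sum, Finset.prod_pow_eq_pow_sum, ← pow_add, ← pow_add, hcard]
    congr 1
    simp [Finset.sum_add_distrib]; ring
  have hf1 : (∏ a : Fin p, ((k a + (n - p)).factorial : ℝ)) ≠ 0 := Finset.prod_ne_zero_iff.2 fun a _ => by positivity
  have hf2 : (∏ a : Fin p, ((k a).factorial : ℝ)) ≠ 0 := Finset.prod_ne_zero_iff.2 fun a _ => by positivity
  have hh : (hookProd lam : ℝ) ≠ 0 := by
    intro h; rw [h, zero_mul] at h2; exact hf1 h2.symm
  unfold tm wt Tw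
  rw [hind]
  simp only [Finset.prod_mul_distrib, Finset.prod_div_distrib]
  rw [← h3, ← h2]
  unfold sfp
  set V := (Matrix.vandermonde fun a => (k a : ℝ)).det
  set A := ∏ a : Fin p, ((k a).factorial : ℝ)
  set S := ∏ j : Fin p, ((j : ℕ).factorial : ℝ)
  set X := ∏ a, x ^ (k a)
  have : (numSSYT lam p : ℝ) * S = V := by rw [mul_comm]; exact h1
  field_simp
  linear_combination (Hstrip n p q lam : ℝ) * S * (numSSYT lam p : ℝ) * h4 + x ^ (p * (n - p)) * X * (Hstrip n p q lam : ℝ) * this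

lemma hasSum_strictMono (N : ℕ) (f : (Fin N → ℕ) → ℝ) (V : ℝ) (hf : HasSum f ((N.factorial : ℝ) * V))
    (hsym : ∀ (r : Fin N → ℕ) (σ : Equiv.Perm (Fin N)), f (r ∘ σ) = f r) (h0 : ∀ r, ¬ Function.Injective r → f r = 0) :
    HasSum (fun r : {r : Fin N → ℕ // StrictMono r} => f r) V := by
  let e : {r : Fin N → ℕ // StrictMono r} × Equiv.Perm (Fin N) → (Fin N → ℕ) := fun c => c.1.1 ∘ c.2
  have hinj : Function.Injective e := by
    rintro ⟨⟨r, hr⟩, σ⟩ ⟨⟨r', hr'⟩, σ'⟩ h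
    simp only [e] at h
    have h1 : r = r' := by
      rw [← hr.range_inj hr', ← σ.surjective.range_comp r, h, σ'.surjective.range_comp]
    subst h1
    have h2 : σ = σ' := by
      ext i
      have := hr.injective (congrFun h i)
      rw [this]
    rw [h2]
  have h1 : HasSum (f ∘ e) ((N.factorial : ℝ) * V) := by
    rw [hinj.hasSum_iff]
    · exact hf
    · intro r hr
      apply h0
      intro hri
      apply hr
      refine ⟨(⟨r ∘ Tuple.sort r, ?_⟩, (Tuple.sort r)⁻¹), ?_⟩
      · exact (Tuple.monotone_sort r).strictMono_of_injective (hri.comp (Tuple.sort r).injective)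
      · funext i; simp [e]
  have h2 := h1.prod_fiberwise (g := fun r : {r : Fin N → ℕ // StrictMono r} => (N.factorial : ℝ) * f r) (by
    intro r
    have := hasSum_fintype (fun σ : Equiv.Perm (Fin N) => (f ∘ e) (r, σ))
    convert this using 1
    simp only [Function.comp_apply, e, hsym]
    simp [Fintype.card_perm])
  have h3 := h2.mul_left ((N.factorial : ℝ)⁻¹)
  have hne : (N.factorial : ℝ) ≠ 0 := by positivity
  simpa [inv_mul_cancel_left₀ hne] using h3

lemma tm_sym (α β N : ℕ) (x : ℝ) (r : Fin N → ℕ) (σ : Equiv.Perm (Fin N)) : tm α β N x (r ∘ σ) = tm α β N x r := by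
  unfold tm
  congr 1
  · have e : (Matrix.vandermonde fun l => ((r ∘ σ) l : ℝ)) = (Matrix.vandermonde fun l => (r l : ℝ)).submatrix σ id := rfl
    rw [e, Matrix.det_permute, mul_pow]
    have : (((Equiv.Perm.sign σ : ℤ) : ℝ)) ^ 2 = 1 := by
      rcases Int.units_eq_one_or (Equiv.Perm.sign σ) with h | h <;> simp [h]
    rw [this, one_mul]
  · exact Equiv.prod_comp σ (fun l => wt α β (r l) * x ^ (r l))

lemma tm_zero (α β N : ℕ) (x : ℝ) (r : Fin N → ℕ) (h : ¬ Function.Injective r) : tm α β N x r = 0 := by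
  unfold tm
  have : (Matrix.vandermonde fun l => (r l : ℝ)).det = 0 := by
    by_contra hne
    rw [← ne_eq, Matrix.det_vandermonde_ne_zero_iff] at hne
    apply h
    intro a b hab
    exact hne (by simp [hab])
  rw [this]; simp

theorem Tw_hasSum (p q n : ℕ) (hpq : p ≤ q) (hqn : q ≤ n) (x : ℝ) (hx : 0 < x) :
    HasSum (fun lam => Tw p q n lam * x ^ lam.card) (x ^ (p * (n - p)) * Wf (q - p) (n - p) p x / sfp p) := by
  have hab : q - p ≤ n - p := by omega
  have h1 := hasSum_strictMono p _ _ (Wf_hasSum hab p x hx.le) (tm_sym _ _ _ _) (tm_zero _ _ _ _)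
  have hP : 0 < ∏ i : Fin p, x ^ (i : ℕ) := Finset.prod_pos fun i _ => by positivity
  have hS := sfp_pos p
  have h2 := (h1.mul_left (x ^ (p * (n - p)))).div_const (sfp p * ∏ i : Fin p, x ^ (i : ℕ))
  let e : {r : Fin p → ℕ // StrictMono r} → YoungDiagram := fun k => mkY fun a => k.1 a + (n - p)
  have hsm : ∀ k : {r : Fin p → ℕ // StrictMono r}, StrictMono fun a => k.1 a + (n - p) := fun k a b hab => by
    have := k.2 hab
    simp only; omega
  have hinj : Function.Injective e := by
    intro k k' h
    have := congrArg (Lr p) h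
    simp only [e] at this
    rw [Lr_mkY (hsm k), Lr_mkY (hsm k')] at this
    ext a
    have := congrFun this a
    simpa using this
  have h3 : HasSum ((fun lam => Tw p q n lam * x ^ lam.card) ∘ e) (x ^ (p * (n - p)) * Wf (q - p) (n - p) p x / sfp p) := by
    have e1 : ((fun lam => Tw p q n lam * x ^ lam.card) ∘ e) = fun k : {r : Fin p → ℕ // StrictMono r} =>
        x ^ (p * (n - p)) * tm (q - p) (n - p) p x k.1 / (sfp p * ∏ i : Fin p, x ^ (i : ℕ)) := by
      funext k
      simp only [Function.comp_apply, e]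
      rw [eq_div_iff (by positivity)]
      exact Tw_mkY p q n hpq hqn k.1 k.2 x
    have e2 : x ^ (p * (n - p)) * Wf (q - p) (n - p) p x / sfp p =
        x ^ (p * (n - p)) * ((∏ i : Fin p, x ^ (i : ℕ)) * Wf (q - p) (n - p) p x) / (sfp p * ∏ i : Fin p, x ^ (i : ℕ)) := by
      rw [div_eq_div_iff hS.ne' (mul_pos hS hP).ne']; ring
    rw [e1, e2]
    exact h2
  rw [hinj.hasSum_iff] at h3
  · exact h3
  · intro lam hlam
    have : Tw p q n lam = 0 := by
      unfold Tw
      by_cases h0 : lam.rowLen p = 0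
      · by_cases hs : ∀ i < p, n - p ≤ lam.rowLen i
        · exfalso
          apply hlam
          have hge : ∀ a, n - p ≤ Lr p lam a := fun a => by
            have := hs (p - 1 - a) (by have := a.2; omega)
            simp only [Lr]; omega
          refine ⟨⟨fun a => Lr p lam a - (n - p), ?_⟩, ?_⟩
          · intro a b hab
            have h1 := Lr_strictMono p lam hab
            have h2 := hge a
            simp only; omega
          · simp only [e]
            have : (fun a => Lr p lam a - (n - p) + (n - p)) = Lr p lam := by
              funext a; exact Nat.sub_add_cancel (hge a)
            rw [this, mkY_Lr h0]
        · unfold indSup; rw [if_neg hs]; simp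
      · rw [numSSYT_eq_zero lam p h0]; simp
    simp only [this, zero_mul]

end PainA

namespace PainA

def gc (p q n l : ℕ) : ℝ := ∑' lam : YoungDiagram, if lam.card = l then Tw p q n lam else 0

lemma gc_nonneg (p q n l : ℕ) : 0 ≤ gc p q n l := tsum_nonneg fun lam => by
  split_ifs
  · exact Tw_nonneg _ _ _ _
  · exact le_rfl

lemma gc_small (p q n l : ℕ) (h : ¬ p * (n - p) ≤ l) : gc p q n l = 0 := by
  unfold gc
  have : ∀ lam : YoungDiagram, (if lam.card = l then Tw p q n lam else 0) = 0 := by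
    intro lam
    split_ifs with hl
    · unfold Tw
      by_cases h0 : lam.rowLen p = 0
      · by_cases hs : ∀ i < p, n - p ≤ lam.rowLen i
        · exfalso
          apply h
          have h1 := card_eq lam p h0
          have h2 : ∑ a : Fin p, ((n - p) + (a : ℕ)) ≤ ∑ a : Fin p, Lr p lam a := by
            refine Finset.sum_le_sum fun a _ => ?_
            have := hs (p - 1 - a) (by have := a.2; omega)
            simp only [Lr]; omega
          rw [Finset.sum_add_distrib] at h2
          simp only [Finset.sum_const, Finset.card_univ, Fintype.card_fin, smul_eq_mul] at h2
          omega
        · unfold indSup; rw [if_neg hs]; simp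
      · rw [numSSYT_eq_zero lam p h0]; simp
    · rfl
  simp [this]

lemma Gfun_eq_Sr (p q n : ℕ) (hp : 1 ≤ p) : Gfun p q n = Sr (gc p q n) := by
  funext x
  unfold Gfun Sr
  refine tsum_congr fun l => ?_
  split_ifs with h
  · unfold Eword gc
    rw [← tsum_mul_left, ← tsum_mul_right]
    refine tsum_congr fun lam => ?_
    split_ifs with hl
    · unfold Pword fSYT Tw
      rw [hl, mul_pow]
      have h1 : (p : ℝ) ^ l ≠ 0 := by positivity
      have h2 : (l.factorial : ℝ) ≠ 0 := by positivity
      field_simp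
    · simp
  · rw [gc_small p q n l h, zero_mul]

lemma gc_hasSum (p q n : ℕ) (hpq : p ≤ q) (hqn : q ≤ n) (x : ℝ) (hx : 0 < x) :
    HasSum (fun l => gc p q n l * x ^ l) (x ^ (p * (n - p)) * Wf (q - p) (n - p) p x / sfp p) := by
  have h := (Tw_hasSum p q n hpq hqn x hx).tsum_fiberwise YoungDiagram.card
  have e : (fun l => gc p q n l * x ^ l) = fun c => ∑' b : (YoungDiagram.card ⁻¹' {c} : Set YoungDiagram), Tw p q n b.1 * x ^ b.1.card := by
    funext l
    rw [tsum_subtype (YoungDiagram.card ⁻¹' {l}) (fun b => Tw p q n b * x ^ b.card)]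
    unfold gc
    rw [← tsum_mul_right]
    refine tsum_congr fun lam => ?_
    by_cases hl : lam.card = l
    · rw [Set.indicator_of_mem (by simpa using hl), if_pos hl, hl]
    · rw [Set.indicator_of_notMem (by simpa using hl), if_neg hl, zero_mul]
  rw [e]
  exact h

lemma gc_ent (p q n : ℕ) (hpq : p ≤ q) (hqn : q ≤ n) : Ent (gc p q n) := by
  intro r hr
  refine Summable.of_nonneg_of_le (fun k => by positivity) (fun k => ?_) (gc_hasSum p q n hpq hqn (r + 1) (by linarith)).summable
  rw [abs_of_nonneg (gc_nonneg _ _ _ _)]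
  have := gc_nonneg p q n k
  gcongr
  linarith

lemma Gfun_eq (p q n : ℕ) (hp : 1 ≤ p) (hpq : p ≤ q) (hqn : q ≤ n) :
    Gfun p q n = fun x => x ^ (p * (n - p)) * Wf (q - p) (n - p) p x / sfp p := by
  have hab : q - p ≤ n - p := by omega
  have hE := gc_ent p q n hpq hqn
  rw [Gfun_eq_Sr p q n hp]
  have h1 : AnalyticOnNhd ℝ (Sr (gc p q n)) Set.univ := fun x _ => hE.analytic x
  have h2 : AnalyticOnNhd ℝ (fun x => x ^ (p * (n - p)) * Wf (q - p) (n - p) p x / sfp p) Set.univ := fun x _ =>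
    ((analyticAt_id.pow _).mul (Wf_analytic hab p x)).div analyticAt_const (sfp_pos p).ne'
  refine h1.eq_of_eventuallyEq h2 (z₀ := 1) ?_
  filter_upwards [lt_mem_nhds (zero_lt_one' ℝ)] with x hx
  exact (hE.hasSum x).unique (gc_hasSum p q n hpq hqn x hx)

theorem main (p q n : ℕ) (hp : 1 ≤ p) (hpq : p ≤ q) (hqn : q ≤ n) :
    ∃ ε > (0 : ℝ), ∃ v : ℝ → ℝ,
      AnalyticOnNhd ℝ v (Metric.ball (0 : ℝ) ε) ∧
      (∀ x ∈ Metric.ball (0 : ℝ) ε, Gfun p q n x ≠ 0 →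
        v x = x * deriv (Gfun p q n) x / Gfun p q n x - (p : ℝ) * x) ∧
      v 0 = (p : ℝ) * ((n : ℝ) - p) ∧
      deriv v 0 = -((p : ℝ) * ((n : ℝ) - q)) / n ∧
      (∀ x ∈ Metric.ball (0 : ℝ) ε,
        x ^ 2 * iteratedDeriv 3 v x + x * iteratedDeriv 2 v x +
          6 * x * (deriv v x) ^ 2 - 4 * v x * deriv v x +
          4 * ((-(x ^ 2) + 2 * ((n : ℝ) + 2 * ((p : ℝ) - q)) * x -
                ((n : ℝ) - 2 * p) ^ 2) / 4) * deriv v x -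
          2 * ((-(2 * x) + 2 * ((n : ℝ) + 2 * ((p : ℝ) - q))) / 4) * v x +
          2 * ((p : ℝ) * ((p : ℝ) - q) * (x + (n : ℝ) - 2 * p) / 2) = 0) := by
  have hab : q - p ≤ n - p := by omega
  set W := Wf (q - p) (n - p) p with hWd
  have hWa : ∀ x, AnalyticAt ℝ W x := Wf_analytic hab p
  have hW0 : W 0 ≠ 0 := Wf_zero hab p
  obtain ⟨ε, hε, hb⟩ := Metric.eventually_nhds_iff_ball.1 ((hWa 0).continuousAt.eventually_ne hW0)
  let v : ℝ → ℝ := fun x => ((p : ℝ) * ((n : ℝ) - p) - p * x) + x * deriv W x / W x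
  have hva : ∀ x, W x ≠ 0 → AnalyticAt ℝ v x := fun x hx =>
    (analyticAt_const.sub (analyticAt_const.mul analyticAt_id)).add
      ((analyticAt_id.mul (hWa x).deriv).div (hWa x) hx)
  have hvb : AnalyticOnNhd ℝ v (Metric.ball (0 : ℝ) ε) := fun x hx => hva x (hb x hx)
  have hv0 : v 0 = (p : ℝ) * ((n : ℝ) - p) := by simp [v]
  have ode := ode_real (fun j => Ff (q - p) (n - p) j) (fun j => (cf_ent hab j).contDiff) (q - p + 1) (n - p + 1)
    (fun j x _ => Ff_L hab j x) (fun j x _ => Ff_R hab j x) p (fun N => Wf (q - p) (n - p) N) (fun N x => rfl)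
    (fun N x hx => (Wf_pos hab N x hx).ne') (contDiff_iff_contDiffAt.2 fun x => (hWa x).contDiffAt) v n p q rfl
    (by rw [Nat.cast_add, Nat.cast_sub hpq]; push_cast; ring)
    (by rw [Nat.cast_add, Nat.cast_sub (hpq.trans hqn)]; push_cast; ring) (fun x _ => rfl)
  let L : ℝ → ℝ := fun x => x^2*deriv (deriv (deriv v)) x + x*deriv (deriv v) x + 6*x*(deriv v x)^2 - 4*v x*deriv v x + (-x^2+2*((n:ℝ)+2*((p:ℝ)-q))*x-((n:ℝ)-2*p)^2)*deriv v x - (-x+((n:ℝ)+2*((p:ℝ)-q)))*v x + (p:ℝ)*((p:ℝ)-q)*(x+(n:ℝ)-2*p)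
  have hLa : AnalyticOnNhd ℝ L (Metric.ball (0 : ℝ) ε) := by
    intro x hx
    have a0 := hvb x hx
    have a1 := a0.deriv
    have a2 := a1.deriv
    have a3 := a2.deriv
    have ai : AnalyticAt ℝ (fun y : ℝ => y) x := analyticAt_id
    simp only [L]
    fun_prop
  have hL0 : Set.EqOn L 0 (Metric.ball (0 : ℝ) ε) := by
    refine hLa.eqOn_zero_of_preconnected_of_eventuallyEq_zero (convex_ball 0 ε).isPreconnected (z₀ := ε / 2) ?_ ?_
    · rw [Metric.mem_ball, Real.dist_eq, sub_zero, abs_of_pos (by linarith)]; linarith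
    · filter_upwards [lt_mem_nhds (half_pos hε)] with x hx
      exact ode x hx
  have hn : (0 : ℝ) < n := by exact_mod_cast (by omega : 0 < n)
  refine ⟨ε, hε, v, hvb, ?_, hv0, ?_, ?_⟩
  · intro x hx hG
    have hS := (sfp_pos p).ne'
    have hWx := hb x hx
    have hd : HasDerivAt (Gfun p q n) (((p * (n - p) : ℕ) * x ^ (p * (n - p) - 1) * W x + x ^ (p * (n - p)) * deriv W x) / sfp p) x := by
      rw [Gfun_eq p q n hp hpq hqn]
      exact ((hasDerivAt_pow _ x).mul (hWa x).differentiableAt.hasDerivAt).div_const _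
    have hGx : Gfun p q n x = x ^ (p * (n - p)) * W x / sfp p := by rw [Gfun_eq p q n hp hpq hqn]
    have hpow : x ^ (p * (n - p)) ≠ 0 := by
      intro h0; apply hG; rw [hGx, h0]; simp
    have hxm : x * ((p * (n - p) : ℕ) * x ^ (p * (n - p) - 1)) = ((p : ℝ) * ((n : ℝ) - p)) * x ^ (p * (n - p)) := by
      rw [← Nat.cast_sub (hpq.trans hqn), ← Nat.cast_mul]
      generalize p * (n - p) = m
      cases m with
      | zero => simp
      | succ m => rw [Nat.add_sub_cancel, pow_succ]; ring
    rw [hd.deriv, hGx]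
    have e : x * (((p * (n - p) : ℕ) * x ^ (p * (n - p) - 1) * W x + x ^ (p * (n - p)) * deriv W x) / sfp p)
        = x ^ (p * (n - p)) * (((p : ℝ) * ((n : ℝ) - p)) * W x + x * deriv W x) / sfp p := by
      rw [mul_div_assoc']
      congr 1
      linear_combination W x * hxm
    rw [e]
    simp only [v]
    generalize x ^ (p * (n - p)) = y at hpow
    field_simp
    ring
  · have h0 := hL0 (Metric.mem_ball_self hε)
    simp only [L, hv0, Pi.zero_apply] at h0
    rw [eq_div_iff hn.ne']
    have : (n : ℝ) * (deriv v 0 * n - -((p : ℝ) * ((n : ℝ) - q))) = 0 := by linear_combination -h0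
    rcases mul_eq_zero.1 this with h | h
    · exact absurd h hn.ne'
    · linarith
  · intro x hx
    have h0 := hL0 hx
    simp only [L, Pi.zero_apply] at h0
    rw [iteratedDeriv_succ, iteratedDeriv_succ, iteratedDeriv_one]
    linear_combination h0

end PainA

/-- `u(x) = x G'(x)/G(x) − p x` extends analytically near `x = 0`,
with `u(0) = p(n−p)`, `u'(0) = −p(n−q)/n`, and satisfies the Painlevé V type
equation `x²u‴ + xu″ + 6x u′² − 4uu′ + 4Q u′ − 2Q′ u + 2R = 0`. -/
theorem statement1 (p q n : ℕ) (hp : 1 ≤ p) (hpq : p ≤ q) (hqn : q ≤ n) :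
    ∃ ε > (0 : ℝ), ∃ v : ℝ → ℝ,
      AnalyticOnNhd ℝ v (Metric.ball (0 : ℝ) ε) ∧
      (∀ x ∈ Metric.ball (0 : ℝ) ε, Gfun p q n x ≠ 0 →
        v x = x * deriv (Gfun p q n) x / Gfun p q n x - (p : ℝ) * x) ∧
      v 0 = (p : ℝ) * ((n : ℝ) - p) ∧
      deriv v 0 = -((p : ℝ) * ((n : ℝ) - q)) / n ∧
      (∀ x ∈ Metric.ball (0 : ℝ) ε,
        x ^ 2 * iteratedDeriv 3 v x + x * iteratedDeriv 2 v x +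
          6 * x * (deriv v x) ^ 2 - 4 * v x * deriv v x +
          4 * ((-(x ^ 2) + 2 * ((n : ℝ) + 2 * ((p : ℝ) - q)) * x -
                ((n : ℝ) - 2 * p) ^ 2) / 4) * deriv v x -
          2 * ((-(2 * x) + 2 * ((n : ℝ) + 2 * ((p : ℝ) - q))) / 4) * v x +
          2 * ((p : ℝ) * ((p : ℝ) - q) * (x + (n : ℝ) - 2 * p) / 2) = 0) := by
  exact PainA.main p q n hp hpq hqn

end
end
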